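/- For any continuous almost embedding g : K5−(4,5) → ℝ² there is a piecewise linear almost embedding f : K5−(4,5) → ℝ² such that the restriction of f to K_{2,3} is an embedding (injective) and l(f) = l(g). -/

import Mathlib

/-!
The number `w(g|K₃, g(4)) - w(g|K₃, g(5))` is `1` or `-1` for every almost embedding `g`
(`winding_diff`). Granting this, a planar straight-line drawing of `K₅ − (4,5)` and its mirror
image are piecewise linear embeddings whose values of `l` are opposite, so one of them has
`l(f) = l(g)`.

To compute `l(g)`, put `P = g(4)`, `Q = g(5)` and pass to the coordinate
`log ((z - Q) / (z - P))`. The sphere minus `{P, Q}` is covered by the plane, with deck group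
generated by the translation by `2πi`; the point `P` moves to `Re = +∞` and `Q` to `Re = -∞`. For
each `i ∈ {1,2,3}` the two edges `i4` and `i5` lift to a path `Λ_i` going from the far left to the
far right through a base point `p_i` over `g(i)`, and `K₃` lifts to a path from `p_1` to
`p_1 + 2πi l` (up to sign). The right half of `Λ_i` is disjoint from all translates of the left
half of `Λ_j`, `j ≠ i`, and the lift of the edge of `K₃` opposite to `i` avoids all translates of
`Λ_i`.

Let `u_i` be the function that equals `1` above `Λ_i`, `0` below it, and jumps along it according
to the intersection number. The key identity (`triple`) is
`u_2(p_1) u_3(p_1) + u_1(p_2) u_3(p_2) + u_1(p_3) u_2(p_3) = 1`: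
for three disjoint graphs of functions it says that exactly one of them is the highest. It is a
discrete Stokes computation: the left half of no path meets the right half of another, so all
local contributions cancel, and what is left comes from the right end, where the three paths are
horizontal rays. Since the identity holds for arbitrary translates of the three paths, it gives a
functional equation for `F(k) = u_1(p_2 - 2πik)` and its two analogues, the three edges of `K₃`
linking the values of each `u_i` at the two other base points. Because `F` is `0` for large and `1`
for very negative arguments, the equation forces `F = 1` on negative and `F = 0` on positive
integers, and then `l = ± 1` (`eq_one_or_of_functional`).

To avoid plane topology, the paths are replaced by grid neighbourhoods of a small mesh dividing
`2π` (`cont_core`), and the key identity is proved for integer 1-chains on the lattice `ℤ²`.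
-/

open Set

noncomputable section

/-- The vertex `i` of `K₅` (vertices are 0-indexed: index `i` is vertex `i+1`),
realized as a point of `ℝ⁵`. -/
def vert (i : Fin 5) : Fin 5 → ℝ := Pi.single i 1

/-- The edge between vertices `i` and `j`, realized as a segment in `ℝ⁵`. -/
def seg (i j : Fin 5) : Set (Fin 5 → ℝ) := segment ℝ (vert i) (vert j)

/-- `(i, j)` is an edge of `K₅ − (4,5)`: the edge between vertices `4` and `5`
(indices `3` and `4`) is deleted. -/
def IsEdge (i j : Fin 5) : Prop := i ≠ j ∧ ({i, j} : Set (Fin 5)) ≠ {3, 4}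

/-- The graph `K₅ − (4,5)`, realized as a 1-dimensional simplicial complex in `ℝ⁵`. -/
def K5m45 : Set (Fin 5 → ℝ) := ⋃ (i) (j) (_ : IsEdge i j), seg i j

/-- `g` is a continuous almost embedding of `K₅ − (4,5)` in the plane `ℝ² = ℂ`:
it is continuous on the complex, and the images of any two disjoint
(non-adjacent) edges are disjoint. -/
def AlmostEmb (g : (Fin 5 → ℝ) → ℂ) : Prop :=
  ContinuousOn g K5m45 ∧
  ∀ i j k l : Fin 5, IsEdge i j → IsEdge k l →
    ({i, j} : Set (Fin 5)) ∩ ({k, l} : Set (Fin 5)) = ∅ →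
    Disjoint (g '' seg i j) (g '' seg k l)

/-- The closed curve traversing the cycle `K₃` on vertices `1, 2, 3`, oriented by
the cyclic permutation `(1 2 3)`. -/
def triLoop (t : ℝ) : Fin 5 → ℝ :=
  if t ≤ 1/3 then (1 - 3*t) • vert 0 + (3*t) • vert 1
  else if t ≤ 2/3 then (2 - 3*t) • vert 1 + (3*t - 1) • vert 2
  else (3 - 3*t) • vert 2 + (3*t - 2) • vert 0

/-- `n` is the winding number around `A` of the closed curve `γ` (a loop
parametrized by `[0,1]`): a continuous logarithm of `γ - A` gains `2πin`
along the loop. -/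
def IsWindingNumber (γ : ℝ → ℂ) (A : ℂ) (n : ℤ) : Prop :=
  ∃ h : ℝ → ℂ, ContinuousOn h (Icc 0 1) ∧
    (∀ t ∈ Icc (0:ℝ) 1, γ t = A + Complex.exp (h t)) ∧
    h 1 - h 0 = 2 * (Real.pi : ℂ) * Complex.I * (n : ℂ)

/-- `f : [0,1] → ℂ` is affine on `[a, b]`. -/
def AffOn (f : ℝ → ℂ) (a b : ℝ) : Prop := ∃ c d : ℂ, ∀ t ∈ Icc a b, f t = c + t * d

/-- `f : [0,1] → ℂ` is piecewise linear: there is a subdivision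
`0 = s 0 < s 1 < ⋯ < s n = 1` of `[0,1]` such that `f` is affine on each part. -/
def PLOn (f : ℝ → ℂ) : Prop :=
  ∃ n : ℕ, ∃ s : Fin (n+1) → ℝ, StrictMono s ∧ s 0 = 0 ∧ s (Fin.last n) = 1 ∧
    ∀ k : Fin n, AffOn f (s k.castSucc) (s k.succ)

/-- `g` is piecewise linear on `K₅ − (4,5)`: on every edge of the graph
(affinely parametrized by `[0,1]`), `g` is piecewise linear, i.e. linear on
each edge of some subdivision of the graph. -/
def IsPL (g : (Fin 5 → ℝ) → ℂ) : Prop :=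
  ∀ i j, IsEdge i j → PLOn (fun t => g ((1-t) • vert i + t • vert j))

/-- The complete bipartite subgraph `K_{2,3}` of `K₅ − (4,5)`, with parts
`{1,2,3}` (indices `0,1,2`) and `{4,5}` (indices `3,4`). -/
def K23 : Set (Fin 5 → ℝ) :=
  ⋃ (i ∈ ({0, 1, 2} : Set (Fin 5))) (j ∈ ({3, 4} : Set (Fin 5))), seg i j

/-! ### Integer chains on the square lattice and the key identity -/

/-- An integer 1-chain on the square lattice, supported on `S`, with boundary `Q - P`. The number
`h m n` is its coefficient on the edge from `(m, n)` to `(m + 1, n)` and `v m n` the one on the edge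
from `(m, n)` to `(m, n + 1)`. Besides the divergence equation, the structure records Stokes' formula
`pair` and the reindexing rule `shift` (edges are indexed by their end instead of their start) as
sums over any finite set of vertices containing `S`; all these properties are checked on single
edges and are additive. -/
structure IsFlow (S : Set (ℤ × ℤ)) (P Q : ℤ × ℤ) (h v : ℤ → ℤ → ℤ) : Prop where
  hsupp : ∀ m n, h m n ≠ 0 → (m, n) ∈ S ∧ (m + 1, n) ∈ S
  vsupp : ∀ m n, v m n ≠ 0 → (m, n) ∈ S ∧ (m, n + 1) ∈ S
  div : ∀ m n, h m n - h (m - 1) n + v m n - v m (n - 1) =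
    (if (m, n) = P then 1 else 0) - (if (m, n) = Q then 1 else 0)
  pair : ∀ B : Finset (ℤ × ℤ), S ⊆ B → ∀ F : ℤ → ℤ → ℤ,
    ∑ x ∈ B, (h x.1 x.2 * (F (x.1 + 1) x.2 - F x.1 x.2) +
      v x.1 x.2 * (F x.1 (x.2 + 1) - F x.1 x.2)) = F Q.1 Q.2 - F P.1 P.2
  shift : ∀ B : Finset (ℤ × ℤ), S ⊆ B → ∀ G K : ℤ → ℤ → ℤ,
    ∑ x ∈ B, (h x.1 x.2 * G x.1 x.2 + v x.1 x.2 * K x.1 x.2) =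
    ∑ x ∈ B, (h (x.1 - 1) x.2 * G (x.1 - 1) x.2 + v x.1 (x.2 - 1) * K x.1 (x.2 - 1))

theorem IsFlow.refl (S : Set (ℤ × ℤ)) (P : ℤ × ℤ) : IsFlow S P P (fun _ _ => 0) (fun _ _ => 0) where
  hsupp := by simp
  vsupp := by simp
  div := by simp
  pair := by simp
  shift := by simp

theorem IsFlow.symm {S : Set (ℤ × ℤ)} {P Q : ℤ × ℤ} {h v : ℤ → ℤ → ℤ} (H : IsFlow S P Q h v) :
    IsFlow S Q P (fun m n => - h m n) (fun m n => - v m n) where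
  hsupp m n hn := H.hsupp m n (by simpa using hn)
  vsupp m n hn := H.vsupp m n (by simpa using hn)
  div m n := by linarith [H.div m n]
  pair B hB F := by
    rw [← neg_sub (F Q.1 Q.2), ← H.pair B hB F, ← Finset.sum_neg_distrib]
    exact Finset.sum_congr rfl fun x _ => by ring
  shift B hB G K := by
    have := H.shift B hB (fun m n => - G m n) (fun m n => - K m n)
    simpa only [neg_mul, mul_neg] using this

theorem IsFlow.trans {S : Set (ℤ × ℤ)} {P Q T : ℤ × ℤ} {h v h' v' : ℤ → ℤ → ℤ}
    (H : IsFlow S P Q h v) (H' : IsFlow S Q T h' v') :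
    IsFlow S P T (fun m n => h m n + h' m n) (fun m n => v m n + v' m n) where
  hsupp m n hn := by
    by_cases h0 : h m n = 0
    · exact H'.hsupp m n (by simpa [h0] using hn)
    · exact H.hsupp m n h0
  vsupp m n hn := by
    by_cases h0 : v m n = 0
    · exact H'.vsupp m n (by simpa [h0] using hn)
    · exact H.vsupp m n h0
  div m n := by linarith [H.div m n, H'.div m n]
  pair B hB F := by
    have e : F T.1 T.2 - F P.1 P.2 = (F Q.1 Q.2 - F P.1 P.2) + (F T.1 T.2 - F Q.1 Q.2) := by ring
    rw [e, ← H.pair B hB F, ← H'.pair B hB F, ← Finset.sum_add_distrib]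
    exact Finset.sum_congr rfl fun x _ => by ring
  shift B hB G K := by
    have e := congrArg₂ (· + ·) (H.shift B hB G K) (H'.shift B hB G K)
    simp only [← Finset.sum_add_distrib] at e
    refine Eq.trans (Finset.sum_congr rfl fun x _ => by ring)
      (e.trans (Finset.sum_congr rfl fun x _ => by ring))

theorem IsFlow.mono {S S' : Set (ℤ × ℤ)} {P Q : ℤ × ℤ} {h v : ℤ → ℤ → ℤ}
    (H : IsFlow S P Q h v) (hS : S ⊆ S') : IsFlow S' P Q h v where
  hsupp m n hn := ⟨hS (H.hsupp m n hn).1, hS (H.hsupp m n hn).2⟩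
  vsupp m n hn := ⟨hS (H.vsupp m n hn).1, hS (H.vsupp m n hn).2⟩
  div := H.div
  pair B hB := H.pair B (hS.trans hB)
  shift B hB := H.shift B (hS.trans hB)

theorem isFlow_hedge (S : Set (ℤ × ℤ)) (a b : ℤ) (h1 : (a, b) ∈ S) (h2 : (a + 1, b) ∈ S) :
    IsFlow S (a, b) (a + 1, b) (fun m n => if (m, n) = (a, b) then 1 else 0) (fun _ _ => 0) where
  hsupp m n hn := by
    by_cases h : (m, n) = (a, b)
    · obtain ⟨rfl, rfl⟩ := Prod.mk.inj h
      exact ⟨h1, h2⟩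
    · simp [h] at hn
  vsupp := by simp
  div m n := by
    simp only [Prod.mk.injEq]
    split_ifs <;> omega
  pair B hB F := by
    have m1 : (a, b) ∈ B := Finset.mem_coe.1 (hB h1)
    simp [Finset.sum_ite_eq', m1]
  shift B hB G K := by
    have e : ∀ x : ℤ × ℤ, ((x.1 - 1, x.2) = (a, b)) ↔ x = (a + 1, b) := by
      rintro ⟨x, y⟩
      simp only [Prod.mk.injEq]
      omega
    have m1 : (a, b) ∈ B := Finset.mem_coe.1 (hB h1)
    have m2 := Finset.mem_coe.1 (hB h2)
    simp [e, Finset.sum_ite_eq', m1, m2]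

theorem isFlow_vedge (S : Set (ℤ × ℤ)) (a b : ℤ) (h1 : (a, b) ∈ S) (h2 : (a, b + 1) ∈ S) :
    IsFlow S (a, b) (a, b + 1) (fun _ _ => 0) (fun m n => if (m, n) = (a, b) then 1 else 0) where
  hsupp := by simp
  vsupp m n hn := by
    by_cases h : (m, n) = (a, b)
    · obtain ⟨rfl, rfl⟩ := Prod.mk.inj h
      exact ⟨h1, h2⟩
    · simp [h] at hn
  div m n := by
    simp only [Prod.mk.injEq]
    split_ifs <;> omega
  pair B hB F := by
    have m1 : (a, b) ∈ B := Finset.mem_coe.1 (hB h1)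
    simp [Finset.sum_ite_eq', m1]
  shift B hB G K := by
    have e : ∀ x : ℤ × ℤ, ((x.1, x.2 - 1) = (a, b)) ↔ x = (a, b + 1) := by
      rintro ⟨x, y⟩
      simp only [Prod.mk.injEq]
      omega
    have m1 : (a, b) ∈ B := Finset.mem_coe.1 (hB h1)
    have m2 := Finset.mem_coe.1 (hB h2)
    simp [e, Finset.sum_ite_eq', m1, m2]

/-- One step along an edge of the square lattice, in the positive direction, inside `S`. -/
def Step (S : Set (ℤ × ℤ)) (x y : ℤ × ℤ) : Prop :=
  x ∈ S ∧ y ∈ S ∧ (y = (x.1 + 1, x.2) ∨ y = (x.1, x.2 + 1))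

/-- `x` and `y` are joined by a lattice path with all its vertices in `S`. -/
def LatticeJoined (S : Set (ℤ × ℤ)) : ℤ × ℤ → ℤ × ℤ → Prop := Relation.EqvGen (Step S)

/-- A lattice path carries a flow between its ends. -/
theorem LatticeJoined.exists_flow {S : Set (ℤ × ℤ)} {P Q : ℤ × ℤ} (H : LatticeJoined S P Q) :
    ∃ h v, IsFlow S P Q h v := by
  induction H with
  | rel x y h =>
    obtain ⟨hx, hy, h | h⟩ := h
    · subst h; exact ⟨_, _, isFlow_hedge S x.1 x.2 hx hy⟩
    · subst h; exact ⟨_, _, isFlow_vedge S x.1 x.2 hx hy⟩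
  | refl x => exact ⟨_, _, IsFlow.refl S x⟩
  | symm x y _ ih => obtain ⟨h, v, H⟩ := ih; exact ⟨_, _, H.symm⟩
  | trans x y z _ _ ih1 ih2 =>
    obtain ⟨h, v, H⟩ := ih1
    obtain ⟨h', v', H'⟩ := ih2
    exact ⟨_, _, H.trans H'⟩

/-- `u` is the side function of a path which comes from the far left inside `SB`, passes through `p`
and goes on inside `SA` to the point `(R, ρ)`, from where it continues as a horizontal ray to the
right. The value `u m n` belongs to the unit square with lower left corner `(m, n)`. The field `ex`
says that `u` jumps across an edge by the coefficient of the flow `(h, v)` in `SA`, except possibly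
at edges inside `SB` and at horizontal edges with `R ≤ m`, that `SA` meets the half-plane `R ≤ m`
in `(R, ρ)` at most, and that on the column `R` the function is the indicator of `ρ ≤ n`. -/
structure IsLine (R : ℤ) (p : ℤ × ℤ) (SA SB : Set (ℤ × ℤ)) (u : ℤ → ℤ → ℤ) : Prop where
  ex : ∃ (ρ : ℤ) (h v : ℤ → ℤ → ℤ), IsFlow SA p (R, ρ) h v ∧
    (∀ m n, u m n - u m (n - 1) ≠ h m n → ((m, n) ∈ SB ∧ (m + 1, n) ∈ SB) ∨ R ≤ m) ∧
    (∀ m n, u (m - 1) n - u m n ≠ v m n → (m, n) ∈ SB ∧ (m, n + 1) ∈ SB) ∧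
    (∀ m n, (m, n) ∈ SA → R ≤ m → m = R ∧ n = ρ) ∧
    (∀ n, u R n = if ρ ≤ n then 1 else 0)
  fin : SA.Finite
  memA : p ∈ SA
  memB : p ∈ SB
  colB : ∀ x ∈ SB, x.1 < R
  lim : ∃ N : ℤ, ∀ m n, (N ≤ n → u m n = 1) ∧ (n ≤ -N → u m n = 0)

theorem IsLine.vert_eq {R : ℤ} {p : ℤ × ℤ} {SA SB : Set (ℤ × ℤ)} {u : ℤ → ℤ → ℤ}
    (L : IsLine R p SA SB u) {m n : ℤ}
    (h : ¬ ((m, n) ∈ SA ∧ (m, n + 1) ∈ SA)) (h' : ¬ ((m, n) ∈ SB ∧ (m, n + 1) ∈ SB)) :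
    u (m - 1) n = u m n := by
  obtain ⟨ρ, a, b, hf, -, hv, -⟩ := L.ex
  have h1 : b m n = 0 := by by_contra hb; exact h (hf.vsupp m n hb)
  have h2 : u (m - 1) n - u m n = b m n := by by_contra hb; exact h' (hv m n hb)
  omega

theorem IsLine.horiz_eq {R : ℤ} {p : ℤ × ℤ} {SA SB : Set (ℤ × ℤ)} {u : ℤ → ℤ → ℤ}
    (L : IsLine R p SA SB u) {m n : ℤ} (hm : m < R)
    (h : ¬ ((m, n) ∈ SA ∧ (m + 1, n) ∈ SA)) (h' : ¬ ((m, n) ∈ SB ∧ (m + 1, n) ∈ SB)) :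
    u m (n - 1) = u m n := by
  obtain ⟨ρ, a, b, hf, hh, -⟩ := L.ex
  have h1 : a m n = 0 := by by_contra hb; exact h (hf.hsupp m n hb)
  have h2 : u m n - u m (n - 1) = a m n := by
    by_contra hb
    rcases hh m n hb with h3 | h3
    · exact h' h3
    · omega
  omega

/-- The values of `u` on the squares below left and above right of a vertex off the path agree. -/
theorem IsLine.corner {R : ℤ} {p : ℤ × ℤ} {SA SB : Set (ℤ × ℤ)} {u : ℤ → ℤ → ℤ}
    (L : IsLine R p SA SB u) {x : ℤ × ℤ} (hx : x.1 < R) (hA : x ∉ SA) (hB : x ∉ SB) :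
    u (x.1 - 1) (x.2 - 1) = u x.1 x.2 := by
  rw [L.horiz_eq (by omega), L.vert_eq]
  all_goals simp [hA, hB]

/-- The side function is constant along lattice paths that avoid the path. -/
theorem IsLine.step {R : ℤ} {p : ℤ × ℤ} {SA SB : Set (ℤ × ℤ)} {u : ℤ → ℤ → ℤ}
    (L : IsLine R p SA SB u) {S : Set (ℤ × ℤ)} (hS : ∀ x ∈ S, x.1 < R ∧ x ∉ SA ∧ x ∉ SB)
    {x y : ℤ × ℤ} (h : LatticeJoined S x y) : u x.1 x.2 = u y.1 y.2 := by
  induction h with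
  | rel x y h =>
    obtain ⟨hx, hy, h | h⟩ := h
    · subst h
      obtain ⟨-, h1, h2⟩ := hS _ hy
      have := L.vert_eq (m := x.1 + 1) (n := x.2) (by simp [h1]) (by simp [h2])
      simpa using this
    · subst h
      obtain ⟨h0, h1, h2⟩ := hS _ hy
      have := L.horiz_eq (m := x.1) (n := x.2 + 1) h0 (by simp [h1]) (by simp [h2])
      simpa using this
  | refl x => rfl
  | symm x y _ ih => exact ih.symm
  | trans x y z _ _ ih1 ih2 => exact ih1.trans ih2

theorem mul_eq_mul_of_not_and {a b c : ℤ} {p : Prop} (h1 : a ≠ 0 → p) (h2 : b ≠ c → ¬ p) : a * b = a * c := by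
  by_cases h : a = 0
  · simp [h]
  · by_cases h' : b = c
    · rw [h']
    · exact absurd (h1 h) (h2 h')

/-- Three paths such that the right part of each avoids the left parts of the others: the base
points satisfy the identity expressing, for disjoint graphs of functions, that exactly one of the
three is the highest. -/
theorem triple {R : ℤ} {p₁ p₂ p₃ : ℤ × ℤ} {A₁ A₂ A₃ B₁ B₂ B₃ : Set (ℤ × ℤ)}
    {u₁ u₂ u₃ : ℤ → ℤ → ℤ}
    (L₁ : IsLine R p₁ A₁ B₁ u₁) (L₂ : IsLine R p₂ A₂ B₂ u₂) (L₃ : IsLine R p₃ A₃ B₃ u₃)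
    (h12 : Disjoint A₁ B₂) (h13 : Disjoint A₁ B₃) (h21 : Disjoint A₂ B₁)
    (h23 : Disjoint A₂ B₃) (h31 : Disjoint A₃ B₁) (h32 : Disjoint A₃ B₂) :
    u₂ p₁.1 p₁.2 * u₃ p₁.1 p₁.2 + u₁ p₂.1 p₂.2 * u₃ p₂.1 p₂.2 + u₁ p₃.1 p₃.2 * u₂ p₃.1 p₃.2
      = 1 := by
  have c1 : p₁.1 < R := L₁.colB _ L₁.memB
  have c2 : p₂.1 < R := L₂.colB _ L₂.memB
  have c3 : p₃.1 < R := L₃.colB _ L₃.memB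
  have k12 := L₂.corner c1 (fun h => Set.disjoint_left.1 h21 h L₁.memB)
    (fun h => Set.disjoint_left.1 h12 L₁.memA h)
  have k13 := L₃.corner c1 (fun h => Set.disjoint_left.1 h31 h L₁.memB)
    (fun h => Set.disjoint_left.1 h13 L₁.memA h)
  have k23 := L₃.corner c2 (fun h => Set.disjoint_left.1 h32 h L₂.memB)
    (fun h => Set.disjoint_left.1 h23 L₂.memA h)
  have wall : ∀ {p : ℤ × ℤ} {A B : Set (ℤ × ℤ)} {u : ℤ → ℤ → ℤ} (L : IsLine R p A B u) (n : ℤ),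
      u (R - 1) n = u R n := by
    intro p A B u L n
    apply L.vert_eq
    · obtain ⟨ρ, a, b, -, -, -, hw, -⟩ := L.ex
      rintro ⟨h1, h2⟩
      have := hw _ _ h1 le_rfl
      have := hw _ _ h2 le_rfl
      omega
    · rintro ⟨h1, -⟩
      exact absurd (L.colB _ h1) (by simp)
  have w2 := wall L₂
  have w3 := wall L₃
  clear wall
  obtain ⟨ρ₁, h₁, v₁, F₁, eh₁, ev₁, wl₁, ur₁⟩ := L₁.ex
  obtain ⟨ρ₂, h₂, v₂, F₂, eh₂, ev₂, wl₂, ur₂⟩ := L₂.ex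
  obtain ⟨ρ₃, h₃, v₃, F₃, eh₃, ev₃, wl₃, ur₃⟩ := L₃.ex
  set B : Finset (ℤ × ℤ) := L₁.fin.toFinset ∪ L₂.fin.toFinset ∪ L₃.fin.toFinset with hB
  have s1 : A₁ ⊆ B := fun x hx => by simp [hB, hx]
  have s2 : A₂ ⊆ B := fun x hx => by simp [hB, hx]
  have s3 : A₃ ⊆ B := fun x hx => by simp [hB, hx]
  -- Stokes' formula on the three right parts. The corners at which `u` is evaluated are chosen so
  -- that the sum of the left-hand sides cancels vertex by vertex.
  have P1 := F₁.pair B s1 (fun m n => u₂ (m - 1) (n - 1) * u₃ (m - 1) (n - 1))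
  have P2 := F₂.pair B s2 (fun m n => u₁ m n * u₃ (m - 1) (n - 1))
  have P3 := F₃.pair B s3 (fun m n => u₁ m n * u₂ m n)
  rw [F₃.shift B s3 (fun m n => u₁ (m+1) n * u₂ (m+1) n - u₁ m n * u₂ m n)
    (fun m n => u₁ m (n+1) * u₂ m (n+1) - u₁ m n * u₂ m n)] at P3
  have Q2 := F₂.shift B s2 (fun m n => u₃ m (n - 1) * (u₁ (m + 1) n - u₁ m n))
    (fun m n => u₃ (m - 1) n * (u₁ m (n + 1) - u₁ m n))
  -- `hV` and `hH`: next to an edge of one flow, the jump of the side function of another path is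
  -- given by the flow in the right part of that path, since the left part is disjoint.
  have hV : ∀ {A A' B : Set (ℤ × ℤ)} {p p' : ℤ × ℤ} {h v h' v' u : ℤ → ℤ → ℤ} {ρ ρ' : ℤ},
      IsFlow A p (R, ρ) h v → IsFlow A' p' (R, ρ') h' v' → Disjoint A B →
      (∀ m n, u (m - 1) n - u m n ≠ v' m n → (m, n) ∈ B ∧ (m, n + 1) ∈ B) → ∀ m n,
      h m n * (u (m - 1) (n - 1) - u m (n - 1)) = h m n * v' m (n - 1) ∧
      h (m - 1) n * (u (m - 1) n - u m n) = h (m - 1) n * v' m n := by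
    intro A A' B p p' h v h' v' u ρ ρ' f f' d e m n
    constructor
    · refine mul_eq_mul_of_not_and (p := (m, n) ∈ A) (fun h0 => (f.hsupp _ _ h0).1) fun h0 hA => ?_
      have := (e _ _ h0).2
      rw [sub_add_cancel] at this
      exact Set.disjoint_left.1 d hA this
    · refine mul_eq_mul_of_not_and (p := (m, n) ∈ A) (fun h0 => by simpa using (f.hsupp _ _ h0).2)
        fun h0 hA => Set.disjoint_left.1 d hA (e _ _ h0).1
  have hH : ∀ {A B : Set (ℤ × ℤ)} {p : ℤ × ℤ} {h v h' u : ℤ → ℤ → ℤ} {ρ : ℤ},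
      IsFlow A p (R, ρ) h v → Disjoint A B →
      (∀ m n, (m, n) ∈ A → R ≤ m → m = R ∧ n = ρ) →
      (∀ m n, u m n - u m (n - 1) ≠ h' m n → ((m, n) ∈ B ∧ (m + 1, n) ∈ B) ∨ R ≤ m) → ∀ m n,
      v m n * (u (m - 1) n - u (m - 1) (n - 1)) = v m n * h' (m - 1) n ∧
      v m (n - 1) * (u m n - u m (n - 1)) = v m (n - 1) * h' m n := by
    intro A B p h v h' u ρ f d w e m n
    constructor
    · refine mul_eq_mul_of_not_and (p := (m, n) ∈ A ∧ (m, n + 1) ∈ A) (f.vsupp _ _) ?_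
      rintro h0 ⟨hA, hA'⟩
      rcases e _ _ h0 with h1 | h1
      · exact Set.disjoint_left.1 d hA (by simpa using h1.2)
      · have := w _ _ hA (by omega)
        omega
    · refine mul_eq_mul_of_not_and (p := (m, n - 1) ∈ A ∧ (m, n) ∈ A)
        (fun h0 => by simpa using f.vsupp _ _ h0) ?_
      rintro h0 ⟨hA', hA⟩
      rcases e _ _ h0 with h1 | h1
      · exact Set.disjoint_left.1 d hA h1.1
      · have := w _ _ hA (by omega)
        have := w _ _ hA' (by omega)
        omega
  have key : ∀ x ∈ B,
      (h₁ x.1 x.2 * (u₂ x.1 (x.2 - 1) * u₃ x.1 (x.2 - 1) - u₂ (x.1 - 1) (x.2 - 1) * u₃ (x.1 - 1) (x.2 - 1))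
       + v₁ x.1 x.2 * (u₂ (x.1 - 1) x.2 * u₃ (x.1 - 1) x.2 - u₂ (x.1 - 1) (x.2 - 1) * u₃ (x.1 - 1) (x.2 - 1)))
      + (h₂ x.1 x.2 * (u₁ x.1 x.2 * (u₃ x.1 (x.2 - 1) - u₃ (x.1 - 1) (x.2 - 1)))
       + v₂ x.1 x.2 * (u₁ x.1 x.2 * (u₃ (x.1 - 1) x.2 - u₃ (x.1 - 1) (x.2 - 1))))
      + (h₂ (x.1 - 1) x.2 * (u₃ (x.1 - 1) (x.2 - 1) * (u₁ x.1 x.2 - u₁ (x.1 - 1) x.2))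
       + v₂ x.1 (x.2 - 1) * (u₃ (x.1 - 1) (x.2 - 1) * (u₁ x.1 x.2 - u₁ x.1 (x.2 - 1))))
      + (h₃ (x.1 - 1) x.2 * (u₁ x.1 x.2 * u₂ x.1 x.2 - u₁ (x.1 - 1) x.2 * u₂ (x.1 - 1) x.2)
       + v₃ x.1 (x.2 - 1) * (u₁ x.1 x.2 * u₂ x.1 x.2 - u₁ x.1 (x.2 - 1) * u₂ x.1 (x.2 - 1))) = 0 := by
    intro x _
    obtain ⟨m, n⟩ := x
    dsimp only
    have a12 := (hV F₁ F₂ h12 ev₂ m n).1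
    have a13 := (hV F₁ F₃ h13 ev₃ m n).1
    have a23 := (hV F₂ F₃ h23 ev₃ m n).1
    have a21 := (hV F₂ F₁ h21 ev₁ m n).2
    have a31 := (hV F₃ F₁ h31 ev₁ m n).2
    have a32 := (hV F₃ F₂ h32 ev₂ m n).2
    have b12 := (hH F₁ h12 wl₁ eh₂ m n).1
    have b13 := (hH F₁ h13 wl₁ eh₃ m n).1
    have b23 := (hH F₂ h23 wl₂ eh₃ m n).1
    have b21 := (hH F₂ h21 wl₂ eh₁ m n).2
    have b31 := (hH F₃ h31 wl₃ eh₁ m n).2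
    have b32 := (hH F₃ h32 wl₃ eh₂ m n).2
    linear_combination (-u₃ (m-1) (n-1)) * a12 - u₂ m (n-1) * a13 - u₁ m n * a23
      - u₃ (m-1) (n-1) * a21 - u₂ (m-1) n * a31 - u₁ m n * a32
      + u₃ (m-1) (n-1) * b12 + u₂ (m-1) n * b13 + u₁ m n * b23
      + u₃ (m-1) (n-1) * b21 + u₂ m (n-1) * b31 + u₁ m n * b32
  have tot := Finset.sum_eq_zero key
  simp only [Finset.sum_add_distrib, mul_sub, Finset.sum_sub_distrib, add_sub_cancel_right,
    sub_add_cancel] at tot P1 P2 P3 Q2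
  simp only [w2, w3, ur₁, ur₂, ur₃, k12, k13, k23] at P1 P2 P3
  -- The contribution of the column `R`: exactly one of the three rays is the highest, where ties are
  -- broken by the index.
  have fin : (if ρ₂ ≤ ρ₁ - 1 then (1:ℤ) else 0) * (if ρ₃ ≤ ρ₁ - 1 then 1 else 0)
      + (if ρ₁ ≤ ρ₂ then (1:ℤ) else 0) * (if ρ₃ ≤ ρ₂ - 1 then 1 else 0)
      + (if ρ₁ ≤ ρ₃ then (1:ℤ) else 0) * (if ρ₂ ≤ ρ₃ then 1 else 0) = 1 := by
    split_ifs <;> omega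
  simp only [mul_comm (u₃ _ _) (u₁ _ _)] at tot Q2
  linarith

/-! ### Existence and translation of side functions -/

theorem int_const {f : ℤ → ℤ} (h : ∀ n, f (n - 1) = f n) (a b : ℤ) : f a = f b := by
  have key : ∀ n, f n = f 0 := by
    intro n
    induction n using Int.induction_on with
    | zero => rfl
    | succ i ih => rw [← ih, ← h]; simp
    | pred i ih => rw [h, ih]
  rw [key a, key b]

/-- A function that vanishes near `-∞` has a discrete primitive with the same property. -/
theorem exists_antidiff (F : ℤ → ℤ) (M : ℤ) (hF : ∀ n, n ≤ -M → F n = 0) :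
    ∃ G : ℤ → ℤ, (∀ n, G n - G (n - 1) = F n) ∧ ∀ n, n ≤ -M → G n = 0 := by
  refine ⟨fun n => ∑ j ∈ Finset.range (n + M).toNat, F (j - M + 1), fun n => ?_, fun n hn => ?_⟩
  · by_cases hn : n ≤ -M
    · have h1 : (n + M).toNat = 0 := by omega
      have h2 : (n - 1 + M).toNat = 0 := by omega
      simp [h1, h2, hF n hn]
    · obtain ⟨k, hk⟩ : ∃ k : ℕ, n + M = k + 1 := ⟨(n + M - 1).toNat, by omega⟩
      have h1 : (n + M).toNat = k + 1 := by omega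
      have h2 : (n - 1 + M).toNat = k := by omega
      simp only [h1, h2, Finset.sum_range_succ, add_sub_cancel_left]
      congr 1
      omega
  · have h1 : (n + M).toNat = 0 := by omega
    simp [h1]

theorem finite_bound {A : Set (ℤ × ℤ)} (hA : A.Finite) :
    ∃ M : ℤ, 0 < M ∧ ∀ x ∈ A, |x.1| < M ∧ |x.2| < M := by
  induction A, hA using Set.Finite.induction_on with
  | empty => exact ⟨1, by simp⟩
  | @insert a s _ _ ih =>
    obtain ⟨M, hM, h⟩ := ih
    refine ⟨max M (max (|a.1| + 1) (|a.2| + 1)), by simp [hM], ?_⟩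
    rintro x (rfl | hx)
    · constructor <;> simp
    · have := h x hx
      constructor <;> simp [this]

/-- Side functions exist: prolong the flow through `p` by horizontal rays on both sides to a flow
without boundary, and integrate its horizontal coefficients upwards in every column. -/
theorem exists_isLine {R ρ y l : ℤ} {p : ℤ × ℤ} {A B B' : Set (ℤ × ℤ)} (hA : A.Finite)
    (hB : B.Finite) (hBB : B ⊆ B') (hpA : p ∈ A) (hpB : p ∈ B) (hcol : ∀ x ∈ B', x.1 < R)
    (hwall : ∀ m n, (m, n) ∈ A → R ≤ m → m = R ∧ n = ρ)
    (hray : ∀ m, m ≤ y → (m, l) ∈ B') (hJA : LatticeJoined A p (R, ρ)) (hJB : LatticeJoined B p (y, l)) :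
    ∃ u, IsLine R p A B' u := by
  obtain ⟨ha, va, fa⟩ := hJA.exists_flow
  obtain ⟨hb, vb, fb⟩ := hJB.exists_flow
  obtain ⟨M₀, hM₀, hM⟩ := finite_bound (hA.union hB)
  set M : ℤ := max M₀ (max (|ρ| + 1) (|l| + 1)) with hMdef
  have hMA : ∀ x ∈ A, -M < x.2 ∧ x.2 < M := fun x hx => by
    have := abs_lt.1 (hM x (Or.inl hx)).2
    have h2 : M₀ ≤ M := le_max_left _ _
    omega
  have hMB : ∀ x ∈ B, -M < x.2 ∧ x.2 < M := fun x hx => by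
    have := abs_lt.1 (hM x (Or.inr hx)).2
    have h2 : M₀ ≤ M := le_max_left _ _
    omega
  have hMρ : -M < ρ ∧ ρ < M := abs_lt.1 (by rw [hMdef]; simp)
  have hMl : -M < l ∧ l < M := abs_lt.1 (by rw [hMdef]; simp)
  have hyR : y < R := hcol _ (hray y le_rfl)
  set H : ℤ → ℤ → ℤ := fun m n => ha m n - hb m n + (if R ≤ m ∧ n = ρ then 1 else 0)
    + (if m < y ∧ n = l then 1 else 0) with hH
  set V : ℤ → ℤ → ℤ := fun m n => va m n - vb m n with hV
  have ha0 : ∀ m n, (n ≤ -M ∨ M ≤ n) → ha m n = 0 := fun m n hn => by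
    by_contra h0
    have := hMA _ (fa.hsupp m n h0).1
    dsimp only at this
    omega
  have va0 : ∀ m n, (n ≤ -M ∨ M ≤ n) → va m n = 0 := fun m n hn => by
    by_contra h0
    have := hMA _ (fa.vsupp m n h0).1
    dsimp only at this
    omega
  have hb0 : ∀ m n, (n ≤ -M ∨ M ≤ n) → hb m n = 0 := fun m n hn => by
    by_contra h0
    have := hMB _ (fb.hsupp m n h0).1
    dsimp only at this
    omega
  have vb0 : ∀ m n, (n ≤ -M ∨ M ≤ n) → vb m n = 0 := fun m n hn => by
    by_contra h0
    have := hMB _ (fb.vsupp m n h0).1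
    dsimp only at this
    omega
  have H0 : ∀ m n, n ≤ -M → H m n = 0 := fun m n hn => by
    simp only [hH, ha0 m n (Or.inl hn), hb0 m n (Or.inl hn)]
    rw [if_neg (by omega), if_neg (by omega)]; rfl
  choose u hu hu0 using fun m => exists_antidiff (H m) M (H0 m)
  have hdiv : ∀ m n, H m n - H (m - 1) n + V m n - V m (n - 1) = 0 := by
    intro m n
    have d1 := fa.div m n
    have d2 := fb.div m n
    have e1 : (if R ≤ m ∧ n = ρ then (1:ℤ) else 0) - (if R ≤ m - 1 ∧ n = ρ then 1 else 0)
        = if (m, n) = (R, ρ) then 1 else 0 := by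
      simp only [Prod.mk.injEq]; split_ifs <;> omega
    have e2 : (if m < y ∧ n = l then (1:ℤ) else 0) - (if m - 1 < y ∧ n = l then 1 else 0)
        = - if (m, n) = (y, l) then 1 else 0 := by
      simp only [Prod.mk.injEq]; split_ifs <;> omega
    simp only [hH, hV]
    linarith
  have huV : ∀ m n, u (m - 1) n - u m n = V m n := by
    intro m n
    have := int_const (f := fun n => u (m - 1) n - u m n - V m n) (fun n => by
      have := hu m n
      have := hu (m - 1) n
      have := hdiv m n
      linarith) n (-M)
    simp only [hu0 _ _ le_rfl, hV, va0 m (-M) (Or.inl le_rfl), vb0 m (-M) (Or.inl le_rfl)] at this ⊢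
    linarith
  have huR : ∀ n, u R n = if ρ ≤ n then 1 else 0 := by
    intro n
    have h1 : ∀ n, ha R n = 0 := fun n => by
      by_contra h0
      have := hwall _ _ (fa.hsupp R n h0).2 (by omega)
      omega
    have h2 : ∀ n, hb R n = 0 := fun n => by
      by_contra h0
      have := hcol _ (hBB (fb.hsupp R n h0).1)
      dsimp only at this
      omega
    have := int_const (f := fun n => u R n - if ρ ≤ n then 1 else 0) (fun n => by
      have h3 := hu R n
      simp only [hH, h1, h2] at h3 ⊢
      split_ifs at h3 ⊢ <;> omega) n (-M)
    simp only [hu0 _ _ le_rfl] at this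
    split_ifs at this ⊢ <;> omega
  refine ⟨u, ⟨ρ, ha, va, fa, ?_, ?_, hwall, huR⟩, hA, hpA, hBB hpB, hcol, M, fun m n => ⟨fun hn => ?_, fun hn => ?_⟩⟩
  · intro m n h0
    rw [hu] at h0
    by_contra! hc
    obtain ⟨hc1, hc2⟩ := hc
    have h2 : hb m n = 0 := by
      by_contra h3
      exact hc1 (hBB (fb.hsupp _ _ h3).1) (hBB (fb.hsupp _ _ h3).2)
    have h3 : ¬ (m < y ∧ n = l) := by
      rintro ⟨h4, rfl⟩
      exact hc1 (hray _ (by omega)) (hray _ (by omega))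
    apply h0
    simp only [hH, h2, if_neg h3]
    rw [if_neg (by omega)]
    omega
  · intro m n h0
    rw [huV] at h0
    have h2 : vb m n ≠ 0 := fun h => h0 (by simp [hV, h])
    exact ⟨hBB (fb.vsupp _ _ h2).1, hBB (fb.vsupp _ _ h2).2⟩
  · have := int_const (f := fun m => u m n) (fun m => by
      have := huV m n
      simp only [hV, va0 m n (Or.inr hn), vb0 m n (Or.inr hn)] at this
      linarith) m R
    rw [this, huR, if_pos (by omega)]
  · exact hu0 m n hn

/-- The upward translate of `S` by `k`. -/
def sh (k : ℤ) (S : Set (ℤ × ℤ)) : Set (ℤ × ℤ) := {x | (x.1, x.2 - k) ∈ S}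

theorem LatticeJoined.mono {S S' : Set (ℤ × ℤ)} (h : S ⊆ S') {x y : ℤ × ℤ} (H : LatticeJoined S x y) :
    LatticeJoined S' x y :=
  Relation.EqvGen.mono (r := Step S) (p := Step S')
    (fun _ _ ⟨a, b, c⟩ => ⟨h a, h b, c⟩) _ _ H

theorem LatticeJoined.shift {S : Set (ℤ × ℤ)} (k : ℤ) {x y : ℤ × ℤ} (H : LatticeJoined S x y) :
    LatticeJoined (sh k S) (x.1, x.2 + k) (y.1, y.2 + k) := by
  induction H with
  | rel x y h =>
    obtain ⟨h1, h2, h3⟩ := h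
    refine Relation.EqvGen.rel _ _ ⟨by simpa [sh] using h1, by simpa [sh] using h2, ?_⟩
    rcases h3 with h | h <;> subst h
    · left; rfl
    · right; simp; ring
  | refl x => exact Relation.EqvGen.refl _
  | symm x y _ ih => exact ih.symm
  | trans x y z _ _ ih1 ih2 => exact ih1.trans _ _ _ ih2

theorem IsFlow.shiftUp {S : Set (ℤ × ℤ)} {P Q : ℤ × ℤ} {h v : ℤ → ℤ → ℤ} (k : ℤ)
    (H : IsFlow S P Q h v) : IsFlow (sh k S) (P.1, P.2 + k) (Q.1, Q.2 + k)
      (fun m n => h m (n - k)) (fun m n => v m (n - k)) where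
  hsupp m n h0 := H.hsupp m (n - k) h0
  vsupp m n h0 := by
    have := H.vsupp m (n - k) h0
    refine ⟨this.1, ?_⟩
    have e : n + 1 - k = n - k + 1 := by ring
    simp only [sh, mem_ofPred_eq, e]
    exact this.2
  div m n := by
    have := H.div m (n - k)
    have e : n - 1 - k = n - k - 1 := by ring
    have e1 : ∀ P : ℤ × ℤ, ((m, n) = (P.1, P.2 + k)) ↔ ((m, n - k) = P) := by
      rintro ⟨a, b⟩; simp only [Prod.mk.injEq]; omega
    simp only [e, e1]
    exact this
  pair B hB F := by
    have := H.pair (B.map (Equiv.prodCongr (Equiv.refl ℤ) (Equiv.subRight k)).toEmbedding) (by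
      intro x hx
      have := hB (show (x.1, x.2 + k) ∈ sh k S by simpa [sh] using hx)
      simp only [Finset.coe_map, Set.mem_image]
      exact ⟨_, this, by simp⟩) (fun m n => F m (n + k))
    rw [Finset.sum_map] at this
    rw [← this]
    refine Finset.sum_congr rfl fun x _ => ?_
    have e : x.2 - k + 1 + k = x.2 + 1 := by ring
    simp [e]
  shift B hB G K := by
    have := H.shift (B.map (Equiv.prodCongr (Equiv.refl ℤ) (Equiv.subRight k)).toEmbedding) (by
      intro x hx
      have := hB (show (x.1, x.2 + k) ∈ sh k S by simpa [sh] using hx)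
      simp only [Finset.coe_map, Set.mem_image]
      exact ⟨_, this, by simp⟩) (fun m n => G m (n + k)) (fun m n => K m (n + k))
    rw [Finset.sum_map, Finset.sum_map] at this
    refine Eq.trans (Finset.sum_congr rfl fun x _ => by simp)
      (this.trans (Finset.sum_congr rfl fun x _ => ?_))
    have e : x.2 - k - 1 = x.2 - 1 - k := by ring
    simp [e]

theorem sh_finite {S : Set (ℤ × ℤ)} (k : ℤ) (hS : S.Finite) : (sh k S).Finite :=
  hS.preimage (f := fun x : ℤ × ℤ => (x.1, x.2 - k)) (by
    rintro ⟨a, b⟩ _ ⟨c, d⟩ _ h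
    simp only [Prod.mk.injEq] at h ⊢
    omega)

theorem IsLine.shiftUp {R : ℤ} {p : ℤ × ℤ} {SA SB : Set (ℤ × ℤ)} {u : ℤ → ℤ → ℤ}
    (L : IsLine R p SA SB u) (k : ℤ) :
    IsLine R (p.1, p.2 + k) (sh k SA) (sh k SB) (fun m n => u m (n - k)) where
  ex := by
    obtain ⟨ρ, h, v, f, eh, ev, w, ur⟩ := L.ex
    refine ⟨ρ + k, _, _, f.shiftUp k, fun m n h0 => ?_, fun m n h0 => ?_, fun m n h1 h2 => ?_,
      fun n => ?_⟩
    · refine eh m (n - k) ?_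
      rwa [show n - k - 1 = n - 1 - k by ring]
    · have := ev m (n - k) h0
      rw [show n - k + 1 = n + 1 - k by ring] at this
      exact this
    · have := w _ _ h1 h2
      omega
    · rw [ur]
      split_ifs <;> omega
  fin := sh_finite k L.fin
  memA := by simpa [sh] using L.memA
  memB := by simpa [sh] using L.memB
  colB x hx := L.colB (x.1, x.2 - k) hx
  lim := by
    obtain ⟨N, hN⟩ := L.lim
    exact ⟨N + |k|, fun m n => ⟨fun h => (hN m (n - k)).1 (by linarith [le_abs_self k]),
      fun h => (hN m (n - k)).2 (by linarith [neg_abs_le k])⟩⟩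

/-! ### The functional equation -/

/-- The functional equation obtained from the key identity for all translates determines `l` up to
sign. -/
theorem eq_one_or_of_functional {F G H : ℤ → ℤ} {l K : ℤ}
    (T : ∀ a b, G (a + l) * H b + F (-a) * H (b - a) + F (-b) * G (a - b) = 1)
    (F0 : ∀ k, K ≤ k → F k = 0) (F1 : ∀ k, k ≤ -K → F k = 1)
    (G0 : ∀ k, K ≤ k → G k = 0) (G1 : ∀ k, k ≤ -K → G k = 1)
    (H1 : ∀ k, k ≤ -K → H k = 1) : l = 1 ∨ l = -1 := by
  -- `e1`, `e2`, `e3`: send one of the three translates to infinity.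
  have e1 : ∀ a, G (a + l) + F (-a) = 1 := fun a => by
    have := T a (-K - |a| - |K|)
    have h1 : -|a| ≤ a ∧ a ≤ |a| := ⟨neg_abs_le a, le_abs_self a⟩
    have h2 : -|K| ≤ K ∧ K ≤ |K| := ⟨neg_abs_le K, le_abs_self K⟩
    rw [H1 _ (by omega), H1 _ (by omega), F0 (-(-K - |a| - |K|)) (by omega)] at this
    linarith
  have e2 : ∀ b, H b + F (-b) = 1 := fun b => by
    have := T (-K - |b| - |K| - |l|) b
    have h1 : -|b| ≤ b ∧ b ≤ |b| := ⟨neg_abs_le b, le_abs_self b⟩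
    have h2 : -|K| ≤ K ∧ K ≤ |K| := ⟨neg_abs_le K, le_abs_self K⟩
    have h3 : -|l| ≤ l ∧ l ≤ |l| := ⟨neg_abs_le l, le_abs_self l⟩
    rw [G1 _ (by omega), G1 _ (by omega), F0 _ (by omega)] at this
    linarith
  have e3 : ∀ d, H d + G (-d) = 1 := fun d => by
    have := T (K + |d| + |K| + |l|) (d + (K + |d| + |K| + |l|))
    have h1 : -|d| ≤ d ∧ d ≤ |d| := ⟨neg_abs_le d, le_abs_self d⟩
    have h2 : -|K| ≤ K ∧ K ≤ |K| := ⟨neg_abs_le K, le_abs_self K⟩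
    have h3 : -|l| ≤ l ∧ l ≤ |l| := ⟨neg_abs_le l, le_abs_self l⟩
    rw [G0 _ (by omega), F1 _ (by omega), F1 _ (by omega), add_sub_cancel_right,
      sub_add_cancel_right] at this
    linarith
  have eG : ∀ k, G k = F k := fun k => by
    have h1 := e2 (-k)
    have h2 := e3 (-k)
    rw [neg_neg] at h1 h2
    linarith
  have fe : ∀ x y, F (x + y) * (F x + F y - 1) = F x * F y := fun x y => by
    have := T (-x) (-(x + y))
    have h1 := e1 (-x)
    have h2 := e2 (-(x + y))
    have h3 := e2 (-(x + y) - -x)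
    rw [eG (-x - -(x + y))] at this
    rw [neg_neg] at h1 h2 this
    rw [show -(-(x + y) - -x) = y by ring] at h3
    rw [show -x - -(x + y) = y by ring, neg_neg] at this
    have h1' : G (-x + l) = 1 - F x := by linarith
    have h2' : H (-(x + y)) = 1 - F (x + y) := by linarith
    have h3' : H (-(x + y) - -x) = 1 - F y := by linarith
    rw [h1', h2', h3'] at this
    linarith
  -- By `fe`, if `F k ≠ 0` then `F` is nonzero at all positive multiples of `k`; likewise for `F ≠ 1`.
  have pos : ∀ k, 0 < k → F k = 0 := fun k hk => by
    by_contra h0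
    have key : ∀ n : ℕ, F ((n + 1) * k) ≠ 0 := by
      intro n
      induction n with
      | zero => simpa using h0
      | succ n ih =>
        intro h1
        have := fe ((n + 1) * k) k
        rw [show ((n:ℤ) + 1) * k + k = ((n + 1 : ℕ) + 1) * k by push_cast; ring, h1, zero_mul] at this
        exact mul_ne_zero ih h0 this.symm
    refine key K.toNat (F0 _ ?_)
    nlinarith [Int.self_le_toNat K, Int.natCast_nonneg K.toNat]
  have neg : ∀ k, k < 0 → F k = 1 := fun k hk => by
    by_contra h0
    have key : ∀ n : ℕ, F ((n + 1) * k) ≠ 1 := by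
      intro n
      induction n with
      | zero => simpa using h0
      | succ n ih =>
        intro h1
        have := fe ((n + 1) * k) k
        rw [show ((n:ℤ) + 1) * k + k = ((n + 1 : ℕ) + 1) * k by push_cast; ring, h1] at this
        exact mul_ne_zero (sub_ne_zero.2 ih) (sub_ne_zero.2 h0) (by linarith)
    refine key K.toNat (F1 _ ?_)
    nlinarith [Int.self_le_toNat K, Int.natCast_nonneg K.toNat]
  have e4 : ∀ a, F (a + l) + F (-a) = 1 := fun a => by rw [← eG]; exact e1 a
  rcases lt_trichotomy l 0 with h | h | h
  · right
    by_contra h'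
    have := e4 1
    rw [neg _ (by omega), neg _ (by omega)] at this
    omega
  · have := e4 0
    simp [h] at this
    omega
  · left
    by_contra h'
    have := e4 (-1)
    rw [pos _ (by omega), pos _ (by omega)] at this
    omega

/-! ### The lattice version of the theorem -/

theorem latticeJoined_ray {S : Set (ℤ × ℤ)} {x ρ : ℤ} (n : ℕ)
    (h : ∀ m, x ≤ m → m ≤ x + n → (m, ρ) ∈ S) : LatticeJoined S (x, ρ) (x + n, ρ) := by
  induction n with
  | zero =>
    rw [Nat.cast_zero, add_zero]
    exact Relation.EqvGen.refl _
  | succ n ih =>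
    refine (ih fun m h1 h2 => h m h1 (by push_cast; omega)).trans _ _ _ (Relation.EqvGen.rel _ _ ?_)
    refine ⟨h _ (by omega) (by push_cast; omega), h _ (by push_cast; omega) le_rfl, Or.inl ?_⟩
    push_cast
    simp [add_assoc]

/-- The lattice version of the theorem: `A i` and `B i` are neighbourhoods of the right and left
halves of the path `i`, `C i` is a neighbourhood of the lift of the edge of the triangle opposite to
`i`, and `N` is the period of the deck translation. -/
theorem discrete_core {N l R₀ : ℤ} (hN : 0 < N) (hR₀ : 0 < R₀) (A B C : Fin 3 → Set (ℤ × ℤ))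
    (p : Fin 3 → ℤ × ℤ) (hA : ∀ i, (A i).Finite) (hB : ∀ i, (B i).Finite)
    (hpA : ∀ i, p i ∈ A i) (hpB : ∀ i, p i ∈ B i)
    (hAr : ∀ i, ∃ x ∈ A i, R₀ ≤ x.1 ∧ LatticeJoined (A i) (p i) x)
    (hBl : ∀ i, ∃ x ∈ B i, x.1 ≤ -R₀ ∧ LatticeJoined (B i) (p i) x)
    (hAc : ∀ i, ∀ x ∈ A i, -R₀ < x.1) (hBc : ∀ i, ∀ x ∈ B i, x.1 < R₀)
    (hAB : ∀ i j, i ≠ j → ∀ k, Disjoint (A i) (sh (k * N) (B j)))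
    (hCc : ∀ i, ∀ x ∈ C i, -R₀ < x.1 ∧ x.1 < R₀)
    (hCA : ∀ i k, Disjoint (C i) (sh (k * N) (A i)))
    (hCB : ∀ i k, Disjoint (C i) (sh (k * N) (B i)))
    (hC0 : LatticeJoined (C 0) (p 1) (p 2))
    (hC1 : LatticeJoined (C 1) (p 2) ((p 0).1, (p 0).2 + l * N))
    (hC2 : LatticeJoined (C 2) (p 0) (p 1)) : l = 1 ∨ l = -1 := by
  choose xr hxr hxr1 hxr2 using hAr
  choose xl hxl hxl1 hxl2 using hBl
  obtain ⟨M, hM0, hM⟩ := finite_bound ((hA 0).union ((hA 1).union (hA 2)))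
  have hMA : ∀ i, ∀ x ∈ A i, x.1 < M := fun i x hx =>
    (le_abs_self _).trans_lt (hM x (by fin_cases i <;> simp_all)).1
  set R : ℤ := max M R₀ with hR
  have hRM : M ≤ R := le_max_left _ _
  have hRR : R₀ ≤ R := le_max_right _ _
  -- The paths are prolonged horizontally, on the left to infinity, on the right to a common column.
  set A' : Fin 3 → Set (ℤ × ℤ) := fun i => A i ∪ {x | R₀ ≤ x.1 ∧ x.1 ≤ R ∧ x.2 = (xr i).2} with hA'
  set B' : Fin 3 → Set (ℤ × ℤ) := fun i => B i ∪ {x | x.1 ≤ -R₀ ∧ x.2 = (xl i).2} with hB'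
  have hline : ∀ i, ∃ u, IsLine R (p i) (A' i) (B' i) u := by
    intro i
    refine exists_isLine (ρ := (xr i).2) (y := (xl i).1) (l := (xl i).2) ?_ (hB i)
      subset_union_left (Or.inl (hpA i)) (hpB i) ?_ ?_ ?_ ?_ (hxl2 i)
    · refine (hA i).union (Set.Finite.subset ((Set.finite_Icc R₀ R).prod
        (Set.finite_singleton (xr i).2)) ?_)
      rintro x ⟨h1, h2, h3⟩
      exact ⟨⟨h1, h2⟩, h3⟩
    · rintro x (hx | ⟨h1, -⟩)
      · exact (hBc i x hx).trans_le hRR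
      · omega
    · rintro m n (h | ⟨-, h2, h3⟩) hm
      · have := hMA i _ h
        dsimp only at this
        omega
      · exact ⟨le_antisymm h2 hm, h3⟩
    · intro m hm
      exact Or.inr ⟨by have := hxl1 i; dsimp only; omega, rfl⟩
    · have h1 : LatticeJoined (A' i) (p i) (xr i) := (hxr2 i).mono subset_union_left
      have h2 := hMA i _ (hxr i)
      have := latticeJoined_ray (S := A' i) (x := (xr i).1) (ρ := (xr i).2) (R - (xr i).1).toNat
        (fun m h3 h4 => Or.inr ⟨(hxr1 i).trans h3, by dsimp only; omega, rfl⟩)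
      rw [show (xr i).1 + ((R - (xr i).1).toNat : ℤ) = R by omega] at this
      exact h1.trans _ _ _ this
  choose u hu using hline
  have hdisj : ∀ i j, i ≠ j → ∀ k k' : ℤ, Disjoint (sh (k * N) (A' i)) (sh (k' * N) (B' j)) := by
    intro i j hij k k'
    rw [Set.disjoint_left]
    rintro x (h1 | ⟨h1, -, -⟩) (h2 | ⟨h2, -⟩)
    · refine Set.disjoint_left.1 (hAB i j hij (k' - k)) h1 ?_
      have e : x.2 - k * N - (k' - k) * N = x.2 - k' * N := by ring
      simpa only [sh, mem_ofPred_eq, e] using h2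
    · have := hAc _ _ h1
      dsimp only at this h2
      omega
    · have := hBc _ _ h2
      dsimp only at this h1
      omega
    · dsimp only at h1 h2
      omega
  have hstep : ∀ i (x y : ℤ × ℤ), LatticeJoined (C i) x y → ∀ k,
      u i x.1 (x.2 - k * N) = u i y.1 (y.2 - k * N) := by
    intro i x y hxy k
    have h1 := hxy.shift (-(k * N))
    have := (hu i).step (S := sh (-(k * N)) (C i)) (fun z hz => ?_) h1
    · simpa only [← sub_eq_add_neg] using this
    · have e : z.2 - -(k * N) - k * N = z.2 := by ring
      have hc := hCc i _ hz
      dsimp only at hc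
      refine ⟨by omega, ?_, ?_⟩
      · rintro (h | ⟨h, -, -⟩)
        · refine Set.disjoint_left.1 (hCA i k) hz ?_
          simpa only [sh, mem_ofPred_eq, e] using h
        · omega
      · rintro (h | ⟨h, -⟩)
        · refine Set.disjoint_left.1 (hCB i k) hz ?_
          simpa only [sh, mem_ofPred_eq, e] using h
        · omega
  have hlim : ∀ i j, ∃ K : ℤ, ∀ k, (K ≤ k → u i (p j).1 ((p j).2 - k * N) = 0) ∧
      (k ≤ -K → u i (p j).1 ((p j).2 - k * N) = 1) := by
    intro i j
    obtain ⟨Q, hQ⟩ := (hu i).lim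
    have h1 : -|Q| ≤ Q ∧ Q ≤ |Q| := ⟨neg_abs_le _, le_abs_self _⟩
    have h2 : -|(p j).2| ≤ (p j).2 ∧ (p j).2 ≤ |(p j).2| := ⟨neg_abs_le _, le_abs_self _⟩
    have h3 := abs_nonneg Q
    have h4 := abs_nonneg (p j).2
    refine ⟨|Q| + |(p j).2|, fun k => ⟨fun hk => (hQ _ _).2 ?_, fun hk => (hQ _ _).1 ?_⟩⟩
    · nlinarith
    · nlinarith
  choose K hK using hlim
  set F : ℤ → ℤ := fun k => u 0 (p 1).1 ((p 1).2 - k * N) with hF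
  set G : ℤ → ℤ := fun k => u 1 (p 2).1 ((p 2).2 - k * N) with hG
  set H : ℤ → ℤ := fun k => u 2 (p 0).1 ((p 0).2 - k * N) with hH
  have F' : ∀ k, u 0 (p 2).1 ((p 2).2 - k * N) = F k := fun k => (hstep 0 _ _ hC0 k).symm
  have G' : ∀ k, u 1 (p 0).1 ((p 0).2 - k * N) = G (k + l) := fun k => by
    have := hstep 1 _ _ hC1 (k + l)
    rw [hG]
    dsimp only at this ⊢
    rw [this]
    congr 1
    ring
  have H' : ∀ k, u 2 (p 1).1 ((p 1).2 - k * N) = H k := fun k => (hstep 2 _ _ hC2 k).symm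
  set KK : ℤ := max (K 0 1) (max (K 1 2) (K 2 0)) with hKK
  have k1 : K 0 1 ≤ KK := le_max_left _ _
  have k2 : K 1 2 ≤ KK := (le_max_left _ _).trans (le_max_right _ _)
  have k3 : K 2 0 ≤ KK := (le_max_right _ _).trans (le_max_right _ _)
  refine eq_one_or_of_functional (F := F) (G := G) (H := H) (K := KK) (fun a b => ?_)
    (fun k hk => (hK 0 1 k).1 (by omega)) (fun k hk => (hK 0 1 k).2 (by omega))
    (fun k hk => (hK 1 2 k).1 (by omega)) (fun k hk => (hK 1 2 k).2 (by omega))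
    (fun k hk => (hK 2 0 k).2 (by omega))
  have := triple ((hu 0).shiftUp (0 * N)) ((hu 1).shiftUp (a * N)) ((hu 2).shiftUp (b * N))
    (hdisj 0 1 (by decide) _ _) (hdisj 0 2 (by decide) _ _) (hdisj 1 0 (by decide) _ _)
    (hdisj 1 2 (by decide) _ _) (hdisj 2 0 (by decide) _ _) (hdisj 2 1 (by decide) _ _)
  dsimp only at this
  rw [show (p 0).2 + 0 * N - a * N = (p 0).2 - a * N by ring,
    show (p 0).2 + 0 * N - b * N = (p 0).2 - b * N by ring,
    show (p 1).2 + a * N - 0 * N = (p 1).2 - (-a) * N by ring,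
    show (p 1).2 + a * N - b * N = (p 1).2 - (b - a) * N by ring,
    show (p 2).2 + b * N - 0 * N = (p 2).2 - (-b) * N by ring,
    show (p 2).2 + b * N - a * N = (p 2).2 - (a - b) * N by ring, F', G', H'] at this
  exact this

/-! ### Approximation of curves by lattice paths -/

/-- Rounding to the lattice of mesh `ε`. -/
def rd (ε : ℝ) (z : ℂ) : ℤ × ℤ := (⌊z.re / ε⌋, ⌊z.im / ε⌋)

/-- The lattice points (of mesh `ε`) at most one step, diagonals included, from the rounding of a
point of the curve `γ : [0,1] → ℂ`. -/
def nbhd (ε : ℝ) (γ : ℝ → ℂ) : Set (ℤ × ℤ) :=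
  {x | ∃ t ∈ Icc (0:ℝ) 1, |x.1 - (rd ε (γ t)).1| ≤ 1 ∧ |x.2 - (rd ε (γ t)).2| ≤ 1}

theorem rd_mem_nbhd {ε : ℝ} {γ : ℝ → ℂ} {t : ℝ} (ht : t ∈ Icc (0:ℝ) 1) :
    rd ε (γ t) ∈ nbhd ε γ := ⟨t, ht, by simp⟩

/-- For a mesh dividing `2π`, rounding commutes with the translations by multiples of `2πi`. -/
theorem rd_add {N : ℕ} (hN : 0 < N) (z : ℂ) (k : ℤ) :
    rd (2 * Real.pi / N) (z + 2 * Real.pi * Complex.I * k) =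
      ((rd (2 * Real.pi / N) z).1, (rd (2 * Real.pi / N) z).2 + k * N) := by
  have hN' : (N : ℝ) ≠ 0 := by positivity
  have hpi := Real.pi_ne_zero
  have e1 : (z + 2 * Real.pi * Complex.I * k).re = z.re := by simp
  have e2 : (z + 2 * Real.pi * Complex.I * k).im = z.im + 2 * Real.pi * k := by simp
  simp only [rd, e1, e2]
  have e3 : (z.im + 2 * Real.pi * k) / (2 * Real.pi / N) =
      z.im / (2 * Real.pi / N) + ((k * N : ℤ) : ℝ) := by
    push_cast
    field_simp
  rw [e3, Int.floor_add_intCast]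

theorem nbhd_finite {ε : ℝ} (hε : 0 < ε) {γ : ℝ → ℂ} (hγ : ContinuousOn γ (Icc 0 1)) :
    (nbhd ε γ).Finite := by
  obtain ⟨C, hC⟩ := isCompact_Icc.exists_bound_of_continuousOn hγ
  have hfl : ∀ x : ℝ, |x| ≤ C → |⌊x / ε⌋| ≤ ⌈C / ε⌉ + 1 := by
    intro x hx
    have h1 := abs_le.1 hx
    have h2 : x / ε ≤ C / ε := by gcongr; exact h1.2
    have h3 : -(C / ε) ≤ x / ε := by rw [← neg_div]; gcongr; exact h1.1
    have h4 := Int.le_ceil (C / ε)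
    have h5 := Int.floor_le (x / ε)
    have h6 := Int.lt_floor_add_one (x / ε)
    rw [abs_le]
    constructor
    · have : (-(⌈C / ε⌉ + 1 : ℤ) : ℝ) ≤ ⌊x / ε⌋ := by push_cast; linarith
      exact_mod_cast this
    · have : (⌊x / ε⌋ : ℝ) ≤ (⌈C / ε⌉ + 1 : ℤ) := by push_cast; linarith
      exact_mod_cast this
  refine Set.Finite.subset ((Set.finite_Icc (-(⌈C / ε⌉ + 2)) (⌈C / ε⌉ + 2)).prod
    (Set.finite_Icc (-(⌈C / ε⌉ + 2)) (⌈C / ε⌉ + 2))) ?_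
  rintro x ⟨t, ht, h1, h2⟩
  have h3 := abs_le.1 (hfl _ ((Complex.abs_re_le_norm _).trans (hC t ht)))
  have h4 := abs_le.1 (hfl _ ((Complex.abs_im_le_norm _).trans (hC t ht)))
  rw [abs_le] at h1 h2
  simp only [rd] at h1 h2
  simp only [Set.mem_prod, Set.mem_Icc]
  omega

theorem latticeJoined_of_near {S : Set (ℤ × ℤ)} {a b : ℤ × ℤ}
    (hS : ∀ x : ℤ × ℤ, |x.1 - a.1| ≤ 1 → |x.2 - a.2| ≤ 1 → x ∈ S)
    (h1 : |b.1 - a.1| ≤ 1) (h2 : |b.2 - a.2| ≤ 1) : LatticeJoined S a b := by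
  have hor : ∀ m m' n : ℤ, |m - a.1| ≤ 1 → |m' - a.1| ≤ 1 → |n - a.2| ≤ 1 → m' = m + 1 →
      LatticeJoined S (m, n) (m', n) := fun m m' n h1 h2 h3 h =>
    Relation.EqvGen.rel _ _ ⟨hS _ h1 h3, hS _ h2 h3, Or.inl (by simp [h])⟩
  have ver : ∀ m n n' : ℤ, |m - a.1| ≤ 1 → |n - a.2| ≤ 1 → |n' - a.2| ≤ 1 → n' = n + 1 →
      LatticeJoined S (m, n) (m, n') := fun m n n' h1 h2 h3 h =>
    Relation.EqvGen.rel _ _ ⟨hS _ h1 h2, hS _ h1 h3, Or.inr (by simp [h])⟩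
  obtain ⟨a1, a2⟩ := a
  obtain ⟨b1, b2⟩ := b
  dsimp only at *
  have s1 : LatticeJoined S (a1, a2) (b1, a2) := by
    have h1' := abs_le.1 h1
    obtain h | rfl | h : b1 = a1 + 1 ∨ b1 = a1 ∨ a1 = b1 + 1 := by omega
    · exact hor _ _ _ (by simp) h1 (by simp) h
    · exact Relation.EqvGen.refl _
    · exact (hor _ _ _ h1 (by simp) (by simp) h).symm
  have s2 : LatticeJoined S (b1, a2) (b1, b2) := by
    have h2' := abs_le.1 h2
    obtain h | rfl | h : b2 = a2 + 1 ∨ b2 = a2 ∨ a2 = b2 + 1 := by omega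
    · exact ver _ _ _ h1 (by simp) h2 h
    · exact Relation.EqvGen.refl _
    · exact (ver _ _ _ h1 h2 (by simp) h).symm
  exact s1.trans _ _ _ s2

theorem abs_floor_sub_le {x y : ℝ} (h : |x - y| < 1) : |⌊x⌋ - ⌊y⌋| ≤ 1 := by
  rw [abs_lt] at h
  have h1 := Int.floor_le x
  have h2 := Int.lt_floor_add_one x
  have h3 := Int.floor_le y
  have h4 := Int.lt_floor_add_one y
  have h5 : (⌊x⌋ : ℝ) - ⌊y⌋ < 2 := by linarith
  have h6 : (-2 : ℝ) < (⌊x⌋ : ℝ) - ⌊y⌋ := by linarith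
  have h5' : ⌊x⌋ - ⌊y⌋ < 2 := by exact_mod_cast h5
  have h6' : -2 < ⌊x⌋ - ⌊y⌋ := by exact_mod_cast h6
  rw [abs_le]
  omega

theorem latticeJoined_nbhd {ε : ℝ} (hε : 0 < ε) {γ : ℝ → ℂ} (hγ : ContinuousOn γ (Icc 0 1))
    {s t : ℝ} (hs : s ∈ Icc (0:ℝ) 1) (ht : t ∈ Icc (0:ℝ) 1) :
    LatticeJoined (nbhd ε γ) (rd ε (γ s)) (rd ε (γ t)) := by
  refine isPreconnected_Icc.induction₂' (fun s t => LatticeJoined (nbhd ε γ) (rd ε (γ s)) (rd ε (γ t)))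
    (fun x hx => ?_) (fun x y z _ _ _ h1 h2 => h1.trans _ _ _ h2) hs ht
  have hev : ∀ᶠ y in nhdsWithin x (Icc 0 1), dist (γ y) (γ x) < ε :=
    Metric.tendsto_nhds.1 (hγ x hx) ε hε
  filter_upwards [hev] with y hy
  have : LatticeJoined (nbhd ε γ) (rd ε (γ x)) (rd ε (γ y)) := by
    rw [Complex.dist_eq] at hy
    refine latticeJoined_of_near (fun z h1 h2 => ⟨x, hx, h1, h2⟩) ?_ ?_
    · apply abs_floor_sub_le
      rw [← sub_div, abs_div, abs_of_pos hε, div_lt_one hε]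
      exact (Complex.abs_re_le_norm (γ y - γ x)).trans_lt hy
    · apply abs_floor_sub_le
      rw [← sub_div, abs_div, abs_of_pos hε, div_lt_one hε]
      exact (Complex.abs_im_le_norm (γ y - γ x)).trans_lt hy
  exact ⟨this, this.symm⟩

theorem nbhd_close {ε : ℝ} (hε : 0 < ε) {γ : ℝ → ℂ} {x : ℤ × ℤ} (hx : x ∈ nbhd ε γ) :
    ∃ t ∈ Icc (0:ℝ) 1, ‖(⟨x.1 * ε, x.2 * ε⟩ : ℂ) - γ t‖ ≤ 4 * ε := by
  obtain ⟨t, ht, h1, h2⟩ := hx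
  refine ⟨t, ht, (Complex.norm_le_abs_re_add_abs_im _).trans ?_⟩
  have key : ∀ (a : ℤ) (y : ℝ), |a - ⌊y / ε⌋| ≤ 1 → |a * ε - y| ≤ 2 * ε := by
    intro a y h
    have h3 : ((|a - ⌊y / ε⌋| : ℤ) : ℝ) ≤ 1 := by exact_mod_cast h
    push_cast at h3
    have h4 := Int.floor_le (y / ε)
    have h5 := Int.lt_floor_add_one (y / ε)
    rw [abs_le] at h3
    have e : a * ε - y = (a - y / ε) * ε := by field_simp
    rw [e, abs_mul, abs_of_pos hε]
    gcongr
    rw [abs_le]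
    constructor <;> linarith
  have := key _ _ h1
  have := key _ _ h2
  simp only [Complex.sub_re, Complex.sub_im]
  linarith

/-- If the exponentials of two curves are disjoint, then for a fine mesh the lattice neighbourhood
of one is disjoint from all translates of that of the other, since a compact set has positive
distance from a disjoint closed periodic set. -/
theorem eventually_disjoint_nbhd {γ γ' : ℝ → ℂ} (hγ : ContinuousOn γ (Icc 0 1))
    (hγ' : ContinuousOn γ' (Icc 0 1))
    (h : ∀ t ∈ Icc (0:ℝ) 1, ∀ s ∈ Icc (0:ℝ) 1, Complex.exp (γ t) ≠ Complex.exp (γ' s)) :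
    ∀ᶠ N : ℕ in Filter.atTop, ∀ k : ℤ,
      Disjoint (nbhd (2 * Real.pi / N) γ) (sh (k * N) (nbhd (2 * Real.pi / N) γ')) := by
  have hK : IsCompact (γ '' Icc 0 1) := isCompact_Icc.image_of_continuousOn hγ
  have hK' : IsClosed (Complex.exp ⁻¹' ((fun s => Complex.exp (γ' s)) '' Icc 0 1)) :=
    (isCompact_Icc.image_of_continuousOn (Complex.continuous_exp.comp_continuousOn hγ')).isClosed.preimage
      Complex.continuous_exp
  have hd : Disjoint (γ '' Icc 0 1)
      (Complex.exp ⁻¹' ((fun s => Complex.exp (γ' s)) '' Icc 0 1)) := by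
    rw [Set.disjoint_left]
    rintro _ ⟨t, ht, rfl⟩ ⟨s, hs, e⟩
    exact h t ht s hs e.symm
  obtain ⟨δ, hδ, hdis⟩ := hd.exists_thickenings hK hK'
  have hlim : Filter.Tendsto (fun N : ℕ => 8 * (2 * Real.pi / N)) Filter.atTop (nhds 0) := by
    simpa using (tendsto_const_div_atTop_nhds_zero_nat (2 * Real.pi)).const_mul 8
  filter_upwards [hlim.eventually_lt_const hδ, Filter.eventually_gt_atTop 0] with N hN hN0 k
  have hN1 : (0:ℝ) < N := by exact_mod_cast hN0
  set ε := 2 * Real.pi / N with hε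
  have hε0 : 0 < ε := by positivity
  rw [Set.disjoint_left]
  intro x hx hx'
  obtain ⟨t, ht, h1⟩ := nbhd_close hε0 hx
  obtain ⟨s, hs, h2⟩ := nbhd_close hε0 hx'
  have e : (⟨x.1 * ε, ((x.2 - k * N : ℤ) : ℝ) * ε⟩ : ℂ) - γ' s =
      (⟨x.1 * ε, x.2 * ε⟩ : ℂ) - (γ' s + k * (2 * Real.pi * Complex.I)) := by
    apply Complex.ext
    · simp
    · simp only [Complex.sub_im, Complex.add_im, Complex.mul_im]
      simp [hε]
      field_simp
      ring
  rw [e] at h2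
  have h3 : dist (γ' s + k * (2 * Real.pi * Complex.I)) (γ t) < δ := by
    rw [Complex.dist_eq]
    calc _ = ‖((⟨x.1 * ε, x.2 * ε⟩ : ℂ) - γ t) -
          ((⟨x.1 * ε, x.2 * ε⟩ : ℂ) - (γ' s + k * (2 * Real.pi * Complex.I)))‖ := by
          congr 1; ring
      _ ≤ 4 * ε + 4 * ε := (norm_sub_le _ _).trans (add_le_add h1 h2)
      _ < δ := by linarith
  refine Set.disjoint_left.1 hdis (?_ : γ' s + k * (2 * Real.pi * Complex.I) ∈ _) ?_
  · exact Metric.mem_thickening_iff.2 ⟨γ t, ⟨t, ht, rfl⟩, h3⟩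
  · refine Metric.self_subset_thickening hδ _ ⟨s, hs, ?_⟩
    simp [Complex.exp_add, Complex.exp_int_mul_two_pi_mul_I]

/-- The theorem in logarithmic coordinates: `α i` and `β i` are the lifts of the edges from `i` to the
two apices, long enough to leave the strip `|Re| ≤ L`, and `c i` is the lift of the edge of the
triangle opposite to `i`. -/
theorem cont_core {l : ℤ} {L : ℝ} (hL : 0 ≤ L) (α β c : Fin 3 → ℝ → ℂ)
    (hα : ∀ i, ContinuousOn (α i) (Icc 0 1)) (hβ : ∀ i, ContinuousOn (β i) (Icc 0 1))
    (hc : ∀ i, ContinuousOn (c i) (Icc 0 1)) (h0 : ∀ i, α i 0 = β i 0)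
    (hα1 : ∀ i, L + 10 ≤ (α i 1).re) (hβ1 : ∀ i, (β i 1).re ≤ -(L + 10))
    (hαL : ∀ i, ∀ t ∈ Icc (0:ℝ) 1, -L ≤ (α i t).re) (hβL : ∀ i, ∀ t ∈ Icc (0:ℝ) 1, (β i t).re ≤ L)
    (hcL : ∀ i, ∀ t ∈ Icc (0:ℝ) 1, -L ≤ (c i t).re ∧ (c i t).re ≤ L)
    (hαβ : ∀ i j, i ≠ j → ∀ t ∈ Icc (0:ℝ) 1, ∀ s ∈ Icc (0:ℝ) 1,
      Complex.exp (α i t) ≠ Complex.exp (β j s))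
    (hcα : ∀ i, ∀ t ∈ Icc (0:ℝ) 1, ∀ s ∈ Icc (0:ℝ) 1, Complex.exp (c i t) ≠ Complex.exp (α i s))
    (hcβ : ∀ i, ∀ t ∈ Icc (0:ℝ) 1, ∀ s ∈ Icc (0:ℝ) 1, Complex.exp (c i t) ≠ Complex.exp (β i s))
    (c00 : c 0 0 = α 1 0) (c01 : c 0 1 = α 2 0) (c10 : c 1 0 = α 2 0)
    (c11 : c 1 1 = α 0 0 + 2 * Real.pi * Complex.I * l) (c20 : c 2 0 = α 0 0)
    (c21 : c 2 1 = α 1 0) : l = 1 ∨ l = -1 := by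
  have ev1 : ∀ᶠ N : ℕ in Filter.atTop, ∀ i j, i ≠ j → ∀ k : ℤ,
      Disjoint (nbhd (2 * Real.pi / N) (α i)) (sh (k * N) (nbhd (2 * Real.pi / N) (β j))) := by
    rw [Filter.eventually_all]; intro i
    rw [Filter.eventually_all]; intro j
    rw [Filter.eventually_imp_distrib_left]; intro hij
    exact eventually_disjoint_nbhd (hα i) (hβ j) (hαβ i j hij)
  have ev2 : ∀ᶠ N : ℕ in Filter.atTop, ∀ i, ∀ k : ℤ,
      Disjoint (nbhd (2 * Real.pi / N) (c i)) (sh (k * N) (nbhd (2 * Real.pi / N) (α i))) := by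
    rw [Filter.eventually_all]; intro i
    exact eventually_disjoint_nbhd (hc i) (hα i) (hcα i)
  have ev3 : ∀ᶠ N : ℕ in Filter.atTop, ∀ i, ∀ k : ℤ,
      Disjoint (nbhd (2 * Real.pi / N) (c i)) (sh (k * N) (nbhd (2 * Real.pi / N) (β i))) := by
    rw [Filter.eventually_all]; intro i
    exact eventually_disjoint_nbhd (hc i) (hβ i) (hcβ i)
  obtain ⟨N, h1, h2, h3, hN⟩ :=
    (ev1.and (ev2.and (ev3.and (Filter.eventually_ge_atTop 7)))).exists
  have hN0 : 0 < N := by omega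
  have hNr : (7:ℝ) ≤ N := by exact_mod_cast hN
  have hN1 := fun z k => rd_add hN0 z k
  set ε := 2 * Real.pi / N with hε
  have hε0 : 0 < ε := by positivity
  have hε1 : ε ≤ 1 := by
    rw [hε, div_le_one (by linarith)]
    linarith [Real.pi_lt_d2]
  have m0 : (0:ℝ) ∈ Icc (0:ℝ) 1 := by simp
  have m1 : (1:ℝ) ∈ Icc (0:ℝ) 1 := by simp
  have hLε : 0 ≤ L / ε := by positivity
  have f1 : ∀ x, x ≤ L → ⌊x / ε⌋ ≤ ⌊L / ε⌋ := fun x hx => by gcongr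
  have f2 : ∀ x, -L ≤ x → -⌊L / ε⌋ - 1 ≤ ⌊x / ε⌋ := fun x hx => by
    rw [Int.le_floor]
    push_cast
    have : -L / ε ≤ x / ε := by gcongr
    rw [neg_div] at this
    linarith [Int.lt_floor_add_one (L / ε)]
  have f3 : 3 ≤ 10 / ε := by rw [le_div_iff₀ hε0]; linarith
  have f4 : ∀ x, L + 10 ≤ x → ⌊L / ε⌋ + 3 ≤ ⌊x / ε⌋ := fun x hx => by
    rw [Int.le_floor]
    push_cast
    have : (L + 10) / ε ≤ x / ε := by gcongr
    rw [add_div] at this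
    linarith [Int.floor_le (L / ε)]
  have f5 : ∀ x, x ≤ -(L + 10) → ⌊x / ε⌋ ≤ -(⌊L / ε⌋ + 3) := fun x hx => by
    have : x / ε ≤ -(L + 10) / ε := by gcongr
    rw [neg_div, add_div] at this
    have h5 : (⌊x / ε⌋ : ℝ) ≤ ((-(⌊L / ε⌋ + 3) : ℤ) : ℝ) := by
      push_cast
      linarith [Int.floor_le (L / ε), Int.floor_le (x / ε)]
    exact_mod_cast h5
  have f6 : 0 ≤ ⌊L / ε⌋ := Int.floor_nonneg.2 hLε
  refine discrete_core (N := N) (R₀ := ⌊L / ε⌋ + 3) (by exact_mod_cast hN0) (by omega)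
    (fun i => nbhd ε (α i)) (fun i => nbhd ε (β i)) (fun i => nbhd ε (c i))
    (fun i => rd ε (α i 0)) (fun i => nbhd_finite hε0 (hα i)) (fun i => nbhd_finite hε0 (hβ i))
    (fun i => rd_mem_nbhd m0) (fun i => by simpa only [h0] using rd_mem_nbhd m0)
    (fun i => ⟨rd ε (α i 1), rd_mem_nbhd m1, f4 _ (hα1 i), latticeJoined_nbhd hε0 (hα i) m0 m1⟩)
    (fun i => ⟨rd ε (β i 1), rd_mem_nbhd m1, f5 _ (hβ1 i), ?_⟩) ?_ ?_ h1 ?_ h2 h3 ?_ ?_ ?_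
  · simpa only [h0] using latticeJoined_nbhd hε0 (hβ i) m0 m1
  · rintro i x ⟨t, ht, h4, -⟩
    have := f2 _ (hαL i t ht)
    rw [abs_le] at h4
    simp only [rd] at h4
    omega
  · rintro i x ⟨t, ht, h4, -⟩
    have := f1 _ (hβL i t ht)
    rw [abs_le] at h4
    simp only [rd] at h4
    omega
  · rintro i x ⟨t, ht, h4, -⟩
    have := f1 _ (hcL i t ht).2
    have := f2 _ (hcL i t ht).1
    rw [abs_le] at h4
    simp only [rd] at h4
    omega
  · have := latticeJoined_nbhd hε0 (hc 0) m0 m1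
    rwa [c00, c01] at this
  · have := latticeJoined_nbhd hε0 (hc 1) m0 m1
    rwa [c10, c11, hN1] at this
  · have := latticeJoined_nbhd hε0 (hc 2) m0 m1
    rwa [c20, c21] at this

/-! ### Passage to logarithmic coordinates -/

/-- Path lifting for the exponential. -/
theorem exists_log_lift {γ : ℝ → ℂ} (hγ : ContinuousOn γ (Icc 0 1))
    (h0 : ∀ t ∈ Icc (0:ℝ) 1, γ t ≠ 0) {w : ℂ} (hw : Complex.exp w = γ 0) :
    ∃ η : ℝ → ℂ, ContinuousOn η (Icc 0 1) ∧ η 0 = w ∧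
      ∀ t ∈ Icc (0:ℝ) 1, Complex.exp (η t) = γ t := by
  let G : C(unitInterval, {z : ℂ // z ≠ 0}) :=
    ⟨fun t => ⟨γ t, h0 t t.2⟩, (hγ.comp_continuous continuous_subtype_val fun t => t.2).subtype_mk _⟩
  obtain ⟨Γ, hΓ, hΓ0⟩ := Complex.isCoveringMap_exp.exists_path_lifts G w
    (Subtype.ext (by simpa [G] using hw.symm))
  refine ⟨fun t => Γ (projIcc 0 1 zero_le_one t),
    (Γ.continuous.comp continuous_projIcc).continuousOn, ?_, fun t ht => ?_⟩
  · have : projIcc (0:ℝ) 1 zero_le_one 0 = 0 := projIcc_left _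
    simp only [this, hΓ0]
  · have := congrArg Subtype.val (congrFun hΓ (projIcc 0 1 zero_le_one t))
    simp only [Function.comp_apply, G, ContinuousMap.coe_mk, projIcc_of_mem _ ht] at this ⊢
    exact this

/-- The image under `log ((z - Q) / (z - P))` of an initial piece of a curve ending at `P`, stopped
so close to the first visit of `P` that the real part exceeds a given `M`. -/
theorem exists_arm {a : ℝ → ℂ} {P Q w : ℂ} (ha : ContinuousOn a (Icc 0 1)) (ha1 : a 1 = P)
    (haQ : ∀ t ∈ Icc (0:ℝ) 1, a t ≠ Q) (ha0 : a 0 ≠ P)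
    (hw : Complex.exp w = (a 0 - Q) / (a 0 - P)) (M : ℝ) :
    ∃ α : ℝ → ℂ, ContinuousOn α (Icc 0 1) ∧ α 0 = w ∧ M ≤ (α 1).re ∧
      ∀ t ∈ Icc (0:ℝ) 1, ∃ s ∈ Icc (0:ℝ) 1, a s ≠ P ∧
        Complex.exp (α t) = (a s - Q) / (a s - P) := by
  obtain ⟨t₀, ht₀, hmin⟩ := isCompact_Icc.exists_isMinOn (f := fun t => ‖a t - Q‖)
    (nonempty_Icc.2 zero_le_one) (ha.sub continuousOn_const).norm
  set m := ‖a t₀ - Q‖ with hm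
  have hm0 : 0 < m := norm_pos_iff.2 (sub_ne_zero.2 (haQ t₀ ht₀))
  have hmle : ∀ t ∈ Icc (0:ℝ) 1, m ≤ ‖a t - Q‖ := fun t ht => hmin ht
  have hcl : IsCompact (Icc (0:ℝ) 1 ∩ a ⁻¹' {P}) :=
    isCompact_Icc.of_isClosed_subset
      (ha.preimage_isClosed_of_isClosed isClosed_Icc isClosed_singleton) inter_subset_left
  obtain ⟨T, ⟨hT, hTP⟩, hleast⟩ := hcl.exists_isLeast ⟨1, by simp, ha1⟩
  have hT0 : 0 < T := lt_of_le_of_ne hT.1 (by rintro rfl; exact ha0 hTP)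
  have hne : ∀ t, 0 ≤ t → t < T → a t ≠ P := fun t h1 h2 h3 =>
    absurd (hleast ⟨⟨h1, h2.le.trans hT.2⟩, h3⟩) (not_le.2 h2)
  have hsub : Ico 0 T ⊆ Icc (0:ℝ) 1 := fun t ht => ⟨ht.1, ht.2.le.trans hT.2⟩
  have hev : ∀ᶠ t in nhdsWithin T (Ico 0 T), dist (a t) (a T) < m * Real.exp (-M) :=
    Metric.tendsto_nhds.1 ((ha T hT).mono hsub) _ (by positivity)
  have hnb : (nhdsWithin T (Ico 0 T)).NeBot := by
    rw [← mem_closure_iff_nhdsWithin_neBot, closure_Ico hT0.ne]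
    exact ⟨hT0.le, le_rfl⟩
  obtain ⟨τ, hτ, hτT⟩ := (hev.and self_mem_nhdsWithin).exists
  have hmem : ∀ t ∈ Icc (0:ℝ) 1, τ * t ∈ Ico 0 T := fun t ht =>
    ⟨mul_nonneg hτT.1 ht.1, (mul_le_of_le_one_right hτT.1 ht.2).trans_lt hτT.2⟩
  have hcont : ContinuousOn (fun t => a (τ * t)) (Icc 0 1) :=
    ha.comp (by fun_prop) fun t ht => hsub (hmem t ht)
  have hP : ∀ t ∈ Icc (0:ℝ) 1, a (τ * t) - P ≠ 0 := fun t ht =>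
    sub_ne_zero.2 (hne _ (hmem t ht).1 (hmem t ht).2)
  obtain ⟨α, hα, hα0, hαe⟩ := exists_log_lift (γ := fun t => (a (τ * t) - Q) / (a (τ * t) - P))
    (w := w) ((hcont.sub continuousOn_const).div (hcont.sub continuousOn_const) hP)
    (fun t ht => div_ne_zero (sub_ne_zero.2 (haQ _ (hsub (hmem t ht)))) (hP t ht))
    (by simpa using hw)
  refine ⟨α, hα, hα0, ?_, fun t ht => ⟨τ * t, hsub (hmem t ht), sub_ne_zero.1 (hP t ht), hαe t ht⟩⟩
  have h1 := hαe 1 (by simp)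
  rw [mul_one] at h1
  rw [← Real.exp_le_exp, ← Complex.norm_exp, h1, norm_div]
  have hp : 0 < ‖a τ - P‖ := norm_pos_iff.2 (by simpa using hP 1 (by simp))
  rw [le_div_iff₀ hp]
  rw [hTP, Complex.dist_eq] at hτ
  calc Real.exp M * ‖a τ - P‖ ≤ Real.exp M * (m * Real.exp (-M)) := by gcongr
    _ = m := by rw [mul_left_comm, ← Real.exp_add]; simp
    _ ≤ _ := hmle _ (hsub hτT)

theorem exists_exp_bound (f : Fin 3 → ℝ → ℂ) (hf : ∀ i, ContinuousOn (f i) (Icc 0 1)) :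
    ∃ L : ℝ, 0 ≤ L ∧ ∀ i, ∀ t ∈ Icc (0:ℝ) 1, ‖f i t‖ ≤ Real.exp L := by
  choose C hC using fun i => isCompact_Icc.exists_bound_of_continuousOn (hf i)
  refine ⟨∑ i, |C i|, by positivity, fun i t ht => (hC i t ht).trans ?_⟩
  have h1 : C i ≤ ∑ i, |C i| :=
    (le_abs_self _).trans (Finset.single_le_sum (f := fun i => |C i|) (fun _ _ => abs_nonneg _)
      (Finset.mem_univ i))
  linarith [Real.add_one_le_exp (∑ i, |C i|)]

theorem div_sub_inj {P Q x y : ℂ} (hPQ : P ≠ Q) (hx : x ≠ P) (hy : y ≠ P)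
    (h : (x - Q) / (x - P) = (y - Q) / (y - P)) : x = y := by
  rw [div_eq_div_iff (sub_ne_zero.2 hx) (sub_ne_zero.2 hy)] at h
  have : (P - Q) * (x - y) = 0 := by linear_combination -h
  exact sub_eq_zero.1 ((mul_eq_zero.1 this).resolve_left (sub_ne_zero.2 hPQ))

/-- The theorem for curves in the plane: `γ` is the closed curve, `a i` and `b i` join its `i`-th
vertex to `P` and `Q`, and `H` is a logarithm of `(γ - Q) / (γ - P)` along `γ`. -/
theorem curve_core {P Q : ℂ} (hPQ : P ≠ Q) {l : ℤ} (a b : Fin 3 → ℝ → ℂ) (γ H : ℝ → ℂ)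
    (ha : ∀ i, ContinuousOn (a i) (Icc 0 1)) (hb : ∀ i, ContinuousOn (b i) (Icc 0 1))
    (hH : ContinuousOn H (Icc 0 1))
    (hγP : ∀ t ∈ Icc (0:ℝ) 1, γ t ≠ P) (hγQ : ∀ t ∈ Icc (0:ℝ) 1, γ t ≠ Q)
    (hHe : ∀ t ∈ Icc (0:ℝ) 1, Complex.exp (H t) = (γ t - Q) / (γ t - P))
    (hl : H 1 = H 0 + 2 * Real.pi * Complex.I * l)
    (a1 : ∀ i, a i 1 = P) (b1 : ∀ i, b i 1 = Q)
    (a0 : ∀ i, a i 0 = γ ((![0, 1/3, 2/3] : Fin 3 → ℝ) i))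
    (b0 : ∀ i, b i 0 = γ ((![0, 1/3, 2/3] : Fin 3 → ℝ) i))
    (haQ : ∀ i, ∀ t ∈ Icc (0:ℝ) 1, a i t ≠ Q) (hbP : ∀ i, ∀ t ∈ Icc (0:ℝ) 1, b i t ≠ P)
    (hab : ∀ i j, i ≠ j → ∀ t ∈ Icc (0:ℝ) 1, ∀ s ∈ Icc (0:ℝ) 1, a i t ≠ b j s)
    (hca : ∀ i, ∀ t ∈ Icc (0:ℝ) 1, ∀ s ∈ Icc (0:ℝ) 1,
      γ ((![1/3, 2/3, 0] : Fin 3 → ℝ) i + t / 3) ≠ a i s)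
    (hcb : ∀ i, ∀ t ∈ Icc (0:ℝ) 1, ∀ s ∈ Icc (0:ℝ) 1,
      γ ((![1/3, 2/3, 0] : Fin 3 → ℝ) i + t / 3) ≠ b i s) : l = 1 ∨ l = -1 := by
  set o : Fin 3 → ℝ := ![1/3, 2/3, 0] with ho
  set v : Fin 3 → ℝ := ![0, 1/3, 2/3] with hv
  have hvm : ∀ i, v i ∈ Icc (0:ℝ) 1 := by
    intro i; fin_cases i <;> simp [hv] <;> norm_num
  have hom : ∀ i, ∀ t ∈ Icc (0:ℝ) 1, o i + t / 3 ∈ Icc (0:ℝ) 1 := by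
    rintro i t ⟨h1, h2⟩
    fin_cases i <;> simp [ho] <;> constructor <;> linarith
  obtain ⟨L₁, hL₁, h₁⟩ := exists_exp_bound (fun i t => (a i t - P) / (a i t - Q))
    (fun i => ((ha i).sub continuousOn_const).div ((ha i).sub continuousOn_const)
      fun t ht => sub_ne_zero.2 (haQ i t ht))
  obtain ⟨L₂, hL₂, h₂⟩ := exists_exp_bound (fun i t => (b i t - Q) / (b i t - P))
    (fun i => ((hb i).sub continuousOn_const).div ((hb i).sub continuousOn_const)
      fun t ht => sub_ne_zero.2 (hbP i t ht))
  obtain ⟨L₃, hL₃⟩ := isCompact_Icc.exists_bound_of_continuousOn hH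
  have hL₃0 : 0 ≤ L₃ := (norm_nonneg _).trans (hL₃ 0 (by simp))
  set L := L₁ + L₂ + L₃ with hL
  choose α hα hα0 hα1 hαe using fun i => exists_arm (w := H (v i)) (ha i) (a1 i) (haQ i)
    (by rw [a0]; exact hγP _ (hvm i)) (by rw [a0]; exact hHe _ (hvm i)) (L + 10)
  choose β hβ hβ0 hβ1 hβe using fun i => exists_arm (w := -H (v i)) (hb i) (b1 i) (hbP i)
    (by rw [b0]; exact hγQ _ (hvm i))
    (by rw [b0, Complex.exp_neg, hHe _ (hvm i), inv_div]) (L + 10)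
  have hβe' : ∀ i, ∀ t ∈ Icc (0:ℝ) 1, ∃ s ∈ Icc (0:ℝ) 1,
      Complex.exp (-β i t) = (b i s - Q) / (b i s - P) := fun i t ht => by
    obtain ⟨s, hs, -, h⟩ := hβe i t ht
    exact ⟨s, hs, by rw [Complex.exp_neg, h, inv_div]⟩
  refine cont_core (L := L) (by positivity) α (fun i t => -β i t) (fun i t => H (o i + t / 3)) hα
    (fun i => (hβ i).neg) (fun i => hH.comp (by fun_prop) fun t ht => hom i t ht)
    (fun i => by simp [hα0, hβ0]) hα1 (fun i => by simpa using hβ1 i) ?_ ?_ ?_ ?_ ?_ ?_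
    ?_ ?_ ?_ ?_ ?_ ?_
  · intro i t ht
    obtain ⟨s, hs, -, h⟩ := hαe i t ht
    have h3 := h₁ i s hs
    have h4 : ‖Complex.exp (-α i t)‖ ≤ Real.exp L₁ := by
      rw [Complex.exp_neg, h, inv_div]; exact h3
    rw [Complex.norm_exp, Real.exp_le_exp, Complex.neg_re] at h4
    linarith
  · intro i t ht
    obtain ⟨s, hs, h⟩ := hβe' i t ht
    have h3 := h₂ i s hs
    rw [← h, Complex.norm_exp, Real.exp_le_exp] at h3
    linarith
  · intro i t ht
    have h5 := abs_le.1 ((Complex.abs_re_le_norm _).trans (hL₃ _ (hom i t ht)))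
    constructor <;> linarith
  · intro i j hij t ht s hs h
    obtain ⟨t', ht', hP, e⟩ := hαe i t ht
    obtain ⟨s', hs', e'⟩ := hβe' j s hs
    rw [e, e'] at h
    exact hab i j hij t' ht' s' hs' (div_sub_inj hPQ hP (hbP j s' hs') h)
  · intro i t ht s hs h
    obtain ⟨s', hs', hP, e⟩ := hαe i s hs
    rw [e, hHe _ (hom i t ht)] at h
    exact hca i t ht s' hs' (div_sub_inj hPQ (hγP _ (hom i t ht)) hP h)
  · intro i t ht s hs h
    obtain ⟨s', hs', e⟩ := hβe' i s hs
    rw [e, hHe _ (hom i t ht)] at h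
    exact hcb i t ht s' hs' (div_sub_inj hPQ (hγP _ (hom i t ht)) (hbP i s' hs') h)
  · simp [hα0, ho, hv]
  · simp only [hα0]; congr 1; simp [ho, hv]; norm_num
  · simp [hα0, ho, hv]
  · simp only [hα0]
    rw [show o 1 + 1 / 3 = 1 by simp [ho]; norm_num, hl]; simp [hv]
  · simp [hα0, ho, hv]
  · simp only [hα0]; congr 1; simp [ho, hv]

/-! ### The winding numbers of an almost embedding -/

theorem isEdge_iff (i j : Fin 5) : IsEdge i j ↔ i ≠ j ∧ ¬ (i = 3 ∧ j = 4) ∧ ¬ (i = 4 ∧ j = 3) := by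
  rw [IsEdge, ne_eq ({i, j} : Set (Fin 5)), Set.pair_eq_pair_iff, not_or]

theorem pair_inter_pair_eq_empty (i j k l : Fin 5) :
    ({i, j} : Set (Fin 5)) ∩ ({k, l} : Set (Fin 5)) = ∅ ↔ i ≠ k ∧ i ≠ l ∧ j ≠ k ∧ j ≠ l := by
  rw [← Set.disjoint_iff_inter_eq_empty]
  simp [eq_comm, and_assoc]
  tauto

theorem mem_seg {i j : Fin 5} {t : ℝ} (ht : t ∈ Icc (0:ℝ) 1) :
    (1 - t) • vert i + t • vert j ∈ seg i j :=
  ⟨1 - t, t, by linarith [ht.2], ht.1, by ring, rfl⟩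

theorem seg_subset {i j : Fin 5} (h : IsEdge i j) : seg i j ⊆ K5m45 :=
  fun _ hx => mem_iUnion.2 ⟨i, mem_iUnion.2 ⟨j, mem_iUnion.2 ⟨h, hx⟩⟩⟩

theorem AlmostEmb.ne {g : (Fin 5 → ℝ) → ℂ} (hg : AlmostEmb g) {i j k l : Fin 5}
    (hij : IsEdge i j) (hkl : IsEdge k l) (h : i ≠ k ∧ i ≠ l ∧ j ≠ k ∧ j ≠ l)
    {x y : Fin 5 → ℝ} (hx : x ∈ seg i j) (hy : y ∈ seg k l) : g x ≠ g y :=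
  Set.disjoint_iff_forall_ne.1
    (hg.2 i j k l hij hkl ((pair_inter_pair_eq_empty i j k l).2 h)) ⟨x, hx, rfl⟩ ⟨y, hy, rfl⟩

/-- The `i`-th third of the loop, numbered so that it is the edge opposite to the vertex `i`. -/
theorem triLoop_mem {t : ℝ} (i : Fin 3) (ht : t ∈ Icc (0:ℝ) 1) :
    triLoop ((![1/3, 2/3, 0] : Fin 3 → ℝ) i + t / 3) ∈
      seg ((![1, 2, 0] : Fin 3 → Fin 5) i) ((![2, 0, 1] : Fin 3 → Fin 5) i) := by
  obtain ⟨h0, h1⟩ := ht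
  fin_cases i
  · change triLoop (1/3 + t / 3) ∈ seg 1 2
    by_cases h : t = 0
    · subst h
      exact ⟨1, 0, by norm_num, by norm_num, by norm_num, by
        rw [triLoop, if_pos (by norm_num)]; norm_num⟩
    · have : 0 < t := lt_of_le_of_ne h0 (Ne.symm h)
      rw [triLoop, if_neg (by linarith), if_pos (by linarith)]
      exact ⟨_, _, by linarith, by linarith, by ring, rfl⟩
  · change triLoop (2/3 + t / 3) ∈ seg 2 0
    by_cases h : t = 0
    · subst h
      exact ⟨1, 0, by norm_num, by norm_num, by norm_num, by
        rw [triLoop, if_neg (by norm_num), if_pos (by norm_num)]; norm_num⟩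
    · have : 0 < t := lt_of_le_of_ne h0 (Ne.symm h)
      rw [triLoop, if_neg (by linarith), if_neg (by linarith)]
      exact ⟨_, _, by linarith, by linarith, by ring, rfl⟩
  · change triLoop (0 + t / 3) ∈ seg 0 1
    rw [triLoop, if_pos (by linarith)]
    exact ⟨_, _, by linarith, by linarith, by ring, rfl⟩

theorem triLoop_vert (i : Fin 3) :
    triLoop ((![0, 1/3, 2/3] : Fin 3 → ℝ) i) = vert ((![0, 1, 2] : Fin 3 → Fin 5) i) := by
  fin_cases i
  · change triLoop 0 = vert 0
    rw [triLoop, if_pos (by norm_num)]; norm_num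
  · change triLoop (1/3) = vert 1
    rw [triLoop, if_pos (by norm_num)]; norm_num
  · change triLoop (2/3) = vert 2
    rw [triLoop, if_neg (by norm_num), if_pos (by norm_num)]; norm_num

/-- The number `l(g)` of an almost embedding is `1` or `-1`. -/
theorem winding_diff {g : (Fin 5 → ℝ) → ℂ} (hg : AlmostEmb g) {n4 n5 : ℤ}
    (h4 : IsWindingNumber (fun t => g (triLoop t)) (g (vert 3)) n4)
    (h5 : IsWindingNumber (fun t => g (triLoop t)) (g (vert 4)) n5) :
    n5 - n4 = 1 ∨ n5 - n4 = -1 := by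
  obtain ⟨p, hp, hpe, hp1⟩ := h4
  obtain ⟨q, hq, hqe, hq1⟩ := h5
  set v : Fin 3 → Fin 5 := ![0, 1, 2] with hv
  have e3 : ∀ i, IsEdge (v i) 3 := by
    intro i; rw [isEdge_iff]; revert i; decide
  have e4 : ∀ i, IsEdge (v i) 4 := by
    intro i; rw [isEdge_iff]; revert i; decide
  have ec : ∀ i, IsEdge ((![1, 2, 0] : Fin 3 → Fin 5) i) ((![2, 0, 1] : Fin 3 → Fin 5) i) := by
    intro i; rw [isEdge_iff]; revert i; decide
  have hcont : ∀ i j, IsEdge i j →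
      ContinuousOn (fun t : ℝ => g ((1 - t) • vert i + t • vert j)) (Icc 0 1) := fun i j h =>
    hg.1.comp (by fun_prop) fun t ht => seg_subset h (mem_seg ht)
  have hsub : ∀ (i j : Fin 5), vert j ∈ seg i j := fun i j => right_mem_segment _ _ _
  have hab : ∀ i j, i ≠ j → ∀ x ∈ seg (v i) 3, ∀ y ∈ seg (v j) 4, g x ≠ g y := by
    intro i j hij x hx y hy
    exact hg.ne (e3 i) (e4 j) (by clear hx hy; revert i j; decide) hx hy
  have hPQ : g (vert 3) ≠ g (vert 4) := hab 0 1 (by decide) _ (hsub _ _) _ (hsub _ _)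
  have hγP : ∀ t ∈ Icc (0:ℝ) 1, g (triLoop t) - g (vert 3) = Complex.exp (p t) := fun t ht => by
    linear_combination hpe t ht
  have hγQ : ∀ t ∈ Icc (0:ℝ) 1, g (triLoop t) - g (vert 4) = Complex.exp (q t) := fun t ht => by
    linear_combination hqe t ht
  refine curve_core hPQ (fun i t => g ((1 - t) • vert (v i) + t • vert 3))
    (fun i t => g ((1 - t) • vert (v i) + t • vert 4)) (fun t => g (triLoop t))
    (fun t => q t - p t) (fun i => hcont _ _ (e3 i)) (fun i => hcont _ _ (e4 i)) (hq.sub hp)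
    (fun t ht => sub_ne_zero.1 (by rw [hγP t ht]; exact Complex.exp_ne_zero _))
    (fun t ht => sub_ne_zero.1 (by rw [hγQ t ht]; exact Complex.exp_ne_zero _))
    (fun t ht => by rw [hγP t ht, hγQ t ht, Complex.exp_sub])
    (by push_cast; linear_combination hq1 - hp1) (fun i => by simp) (fun i => by simp)
    (fun i => by simp only [triLoop_vert]; simp [hv]) (fun i => by simp only [triLoop_vert]; simp [hv])
    ?_ ?_ ?_ ?_ ?_
  · intro i t ht
    exact hab i (i + 1) (by revert i; decide) _ (mem_seg ht) _ (hsub _ _)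
  · intro i t ht
    exact (hab (i + 1) i (by revert i; decide) _ (hsub _ _) _ (mem_seg ht)).symm
  · intro i j hij t ht s hs
    exact hab i j hij _ (mem_seg ht) _ (mem_seg hs)
  · intro i t ht s hs
    exact hg.ne (ec i) (e3 i) (by revert i; decide) (triLoop_mem i ht) (mem_seg hs)
  · intro i t ht s hs
    exact hg.ne (ec i) (e4 i) (by revert i; decide) (triLoop_mem i ht) (mem_seg hs)

/-! ### A straight-line drawing -/

/-- Abscissas of the vertices in the straight-line drawing of `K₅ − (4,5)`. -/
def ptX : Fin 5 → ℤ := ![-3, 3, 0, 0, 0]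

/-- Ordinates of the vertices in the straight-line drawing of `K₅ − (4,5)`. -/
def ptY : Fin 5 → ℤ := ![0, 0, 3, 1, 6]

/-- A planar straight-line drawing of `K₅ − (4,5)`, as a linear map on `ℝ⁵`: vertex `3` lies
inside the triangle `0 1 2` and vertex `4` outside. -/
def drawing : (Fin 5 → ℝ) →ₗ[ℝ] ℂ :=
  Fintype.linearCombination ℝ fun i => (⟨ptX i, ptY i⟩ : ℂ)

theorem drawing_vert (i : Fin 5) : drawing (vert i) = ⟨ptX i, ptY i⟩ := by
  rw [drawing, vert, Fintype.linearCombination_apply_single, one_smul]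

theorem drawing_pos {i j : Fin 5} {a b c : ℤ} (hi : 0 < a * ptX i + b * ptY i + c)
    (hj : 0 < a * ptX j + b * ptY j + c) {x : Fin 5 → ℝ} (hx : x ∈ seg i j) :
    0 < a * (drawing x).re + b * (drawing x).im + c := by
  obtain ⟨s, t, hs, ht, hst, rfl⟩ := hx
  have hi' : (0 : ℝ) < a * ptX i + b * ptY i + c := by exact_mod_cast hi
  have hj' : (0 : ℝ) < a * ptX j + b * ptY j + c := by exact_mod_cast hj
  have e : a * (drawing (s • vert i + t • vert j)).re + b * (drawing (s • vert i + t • vert j)).im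
      + c = s * (a * ptX i + b * ptY i + c) + t * (a * ptX j + b * ptY j + c) := by
    simp only [map_add, map_smul, drawing_vert, Complex.add_re, Complex.add_im, Complex.smul_re,
      Complex.smul_im, smul_eq_mul]
    linear_combination -(c : ℝ) * hst
  rw [e]
  rcases hs.eq_or_lt with rfl | hs
  · rw [zero_add] at hst; subst hst; linarith
  · exact add_pos_of_pos_of_nonneg (mul_pos hs hi') (mul_nonneg ht hj'.le)

/-- Lines separating the pairs of disjoint edges of the drawing: `(a, b, c)` encodes
`a x + b y + c = 0`. -/
def sepLines : List (ℤ × ℤ × ℤ) :=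
  [(0, 2, -1), (1, -1, 2), (-1, -1, 2), (2, 1, -5), (-2, 1, -5), (0, 1, -2),
   (0, -2, 1), (-1, 1, -2), (1, 1, -2), (-2, -1, 5), (2, -1, 5), (0, -1, 2)]

theorem exists_sepLine : ∀ i j : Fin 5, i ≠ j ∧ ¬ (i = 3 ∧ j = 4) ∧ ¬ (i = 4 ∧ j = 3) →
    ∀ k l : Fin 5, k ≠ l ∧ ¬ (k = 3 ∧ l = 4) ∧ ¬ (k = 4 ∧ l = 3) →
    (i ≠ k ∧ i ≠ l ∧ j ≠ k ∧ j ≠ l) →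
    ∃ p ∈ sepLines, 0 < p.1 * ptX i + p.2.1 * ptY i + p.2.2 ∧
      0 < p.1 * ptX j + p.2.1 * ptY j + p.2.2 ∧
      0 < (-p.1) * ptX k + (-p.2.1) * ptY k + (-p.2.2) ∧
      0 < (-p.1) * ptX l + (-p.2.1) * ptY l + (-p.2.2) := by
  set_option maxRecDepth 100000 in decide

theorem almostEmb_drawing : AlmostEmb drawing := by
  refine ⟨(LinearMap.continuous_of_finiteDimensional drawing).continuousOn,
    fun i j k l hij hkl h => ?_⟩
  rw [isEdge_iff] at hij hkl
  obtain ⟨⟨a, b, c⟩, -, h1, h2, h3, h4⟩ :=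
    exists_sepLine i j hij k l hkl ((pair_inter_pair_eq_empty i j k l).1 h)
  rw [Set.disjoint_iff_forall_ne]
  rintro _ ⟨x, hx, rfl⟩ _ ⟨y, hy, rfl⟩ hxy
  have p1 := drawing_pos h1 h2 hx
  have p2 := drawing_pos h3 h4 hy
  rw [hxy] at p1
  push_cast at p1 p2
  linarith

theorem isPL_drawing : IsPL drawing := by
  intro i j _
  refine ⟨1, ![0, 1], ?_, rfl, rfl, fun k => ⟨drawing (vert i), drawing (vert j) - drawing (vert i),
    fun t _ => ?_⟩⟩
  · intro x y hxy
    fin_cases x <;> fin_cases y <;> simp_all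
  · simp only [map_add, map_smul, Complex.real_smul]
    push_cast
    ring

theorem mem_K23 {x : Fin 5 → ℝ} (hx : x ∈ K23) : ∃ i j : Fin 5, (i = 0 ∨ i = 1 ∨ i = 2) ∧
    (j = 3 ∨ j = 4) ∧ ∃ t : ℝ, 0 ≤ t ∧ t ≤ 1 ∧ x = (1 - t) • vert i + t • vert j := by
  simp only [K23, mem_iUnion] at hx
  obtain ⟨i, hi, j, hj, s, t, hs, ht, hst, rfl⟩ := hx
  exact ⟨i, j, hi, hj, t, ht, by linarith, by rw [← hst]; simp⟩

theorem injOn_drawing : InjOn drawing K23 := by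
  intro x hx y hy h
  obtain ⟨i, j, hi, hj, t, ht0, ht1, rfl⟩ := mem_K23 hx
  obtain ⟨k, l, hk, hl, s, hs0, hs1, rfl⟩ := mem_K23 hy
  have key : (i = k ∧ j = l ∧ t = s) ∨ (i = k ∧ t = 0 ∧ s = 0) ∨ (j = l ∧ t = 1 ∧ s = 1) := by
    have h1 := congrArg Complex.re h
    have h2 := congrArg Complex.im h
    simp only [map_add, map_smul, drawing_vert, Complex.add_re, Complex.add_im, Complex.smul_re,
      Complex.smul_im, smul_eq_mul] at h1 h2
    clear h hx hy
    rcases hi with rfl | rfl | rfl <;> rcases hj with rfl | rfl <;>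
      rcases hk with rfl | rfl | rfl <;> rcases hl with rfl | rfl <;>
      simp [ptX, ptY] at h1 h2 ⊢ <;>
      first
        | linarith
        | (constructor <;> linarith)
  rcases key with ⟨rfl, rfl, rfl⟩ | ⟨rfl, rfl, rfl⟩ | ⟨rfl, rfl, rfl⟩ <;> simp

/-! ### Uniqueness of winding numbers and reflection -/

/-- Winding numbers are unique: two continuous logarithms of the same curve differ by a constant. -/
theorem IsWindingNumber.unique {γ : ℝ → ℂ} {A : ℂ} {m n : ℤ} (hm : IsWindingNumber γ A m)
    (hn : IsWindingNumber γ A n) : m = n := by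
  obtain ⟨p, hp, hpe, hp1⟩ := hm
  obtain ⟨q, hq, hqe, hq1⟩ := hn
  have hexp : ∀ t ∈ Icc (0:ℝ) 1, ∃ k : ℤ, p t = q t + k * (2 * Real.pi * Complex.I) :=
    fun t ht => Complex.exp_eq_exp_iff_exists_int.1
      (add_left_cancel ((hpe t ht).symm.trans (hqe t ht)))
  have hne : (2 * Real.pi * Complex.I : ℂ) ≠ 0 := Complex.two_pi_I_ne_zero
  have hconst := isPreconnected_Icc.constant_of_mapsTo (T := range ((↑) : ℤ → ℝ))
    (f := fun t => ((p t - q t) / (2 * Real.pi * Complex.I)).re)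
    (Int.isClosedEmbedding_coe_real.isEmbedding.isDiscrete_range)
    (Complex.continuous_re.comp_continuousOn ((hp.sub hq).div_const _))
    (fun t ht => by
      obtain ⟨k, hk⟩ := hexp t ht
      refine ⟨k, ?_⟩
      simp only [hk, add_sub_cancel_left, mul_div_cancel_right₀ _ hne, Complex.intCast_re])
    (left_mem_Icc.2 zero_le_one) (right_mem_Icc.2 zero_le_one)
  obtain ⟨k₀, h0⟩ := hexp 0 (by simp)
  obtain ⟨k₁, h1⟩ := hexp 1 (by simp)
  simp only [h0, h1, add_sub_cancel_left, mul_div_cancel_right₀ _ hne, Complex.intCast_re] at hconst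
  have hk : (k₀ : ℂ) = k₁ := by exact_mod_cast hconst
  have : (2 * Real.pi * Complex.I : ℂ) * m = 2 * Real.pi * Complex.I * n := by
    linear_combination hq1 - hp1 - h0 + h1 - hk * (2 * Real.pi * Complex.I)
  exact_mod_cast mul_left_cancel₀ hne this

/-- Complex conjugation reverses the orientation of the plane. -/
theorem IsWindingNumber.conj {γ : ℝ → ℂ} {A : ℂ} {n : ℤ} (h : IsWindingNumber γ A n) :
    IsWindingNumber (fun t => (starRingEnd ℂ) (γ t)) ((starRingEnd ℂ) A) (-n) := by
  obtain ⟨p, hp, hpe, hp1⟩ := h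
  refine ⟨fun t => (starRingEnd ℂ) (p t), Complex.continuous_conj.comp_continuousOn hp,
    fun t ht => ?_, ?_⟩
  · simp only [hpe t ht, map_add, Complex.exp_conj]
  · rw [← map_sub, hp1]
    simp [Complex.conj_ofReal, Complex.conj_ofNat]

theorem AlmostEmb.conj {f : (Fin 5 → ℝ) → ℂ} (hf : AlmostEmb f) :
    AlmostEmb fun x => (starRingEnd ℂ) (f x) := by
  refine ⟨Complex.continuous_conj.comp_continuousOn hf.1, fun i j k l hij hkl h => ?_⟩
  have := hf.2 i j k l hij hkl h
  rw [Set.disjoint_iff_forall_ne] at this ⊢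
  rintro _ ⟨x, hx, rfl⟩ _ ⟨y, hy, rfl⟩ hxy
  exact this ⟨x, hx, rfl⟩ ⟨y, hy, rfl⟩ ((starRingEnd ℂ).injective hxy)

theorem IsPL.conj {f : (Fin 5 → ℝ) → ℂ} (hf : IsPL f) : IsPL fun x => (starRingEnd ℂ) (f x) := by
  intro i j hij
  obtain ⟨n, s, hs, h0, h1, h⟩ := hf i j hij
  refine ⟨n, s, hs, h0, h1, fun k => ?_⟩
  obtain ⟨c, d, hcd⟩ := h k
  refine ⟨(starRingEnd ℂ) c, (starRingEnd ℂ) d, fun t ht => ?_⟩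
  have := hcd t ht
  dsimp only at this ⊢
  rw [this]
  simp [Complex.conj_ofReal]

/-- For any continuous almost embedding `g : K₅ − (4,5) → ℝ²` there is a
piecewise linear almost embedding `f : K₅ − (4,5) → ℝ²` such that `f|K_{2,3}`
is an embedding (injective) and `l(f) = l(g)`. -/
theorem exists_PL_almostEmb_injOn_K23 (g : (Fin 5 → ℝ) → ℂ) (hg : AlmostEmb g) :
    ∃ f : (Fin 5 → ℝ) → ℂ, IsPL f ∧ AlmostEmb f ∧ InjOn f K23 ∧
      ∀ n4 n5 m4 m5 : ℤ,
        IsWindingNumber (fun t => g (triLoop t)) (g (vert 3)) n4 →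
        IsWindingNumber (fun t => g (triLoop t)) (g (vert 4)) n5 →
        IsWindingNumber (fun t => f (triLoop t)) (f (vert 3)) m4 →
        IsWindingNumber (fun t => f (triLoop t)) (f (vert 4)) m5 →
        m4 - m5 = n4 - n5 := by
  by_cases hdr : ∀ n4 n5 m4 m5 : ℤ,
        IsWindingNumber (fun t => g (triLoop t)) (g (vert 3)) n4 →
        IsWindingNumber (fun t => g (triLoop t)) (g (vert 4)) n5 →
        IsWindingNumber (fun t => drawing (triLoop t)) (drawing (vert 3)) m4 →
        IsWindingNumber (fun t => drawing (triLoop t)) (drawing (vert 4)) m5 →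
        m4 - m5 = n4 - n5
  · exact ⟨drawing, isPL_drawing, almostEmb_drawing, injOn_drawing, hdr⟩
  push Not at hdr
  obtain ⟨n4, n5, m4, m5, hn4, hn5, hm4, hm5, hne⟩ := hdr
  -- Both `n4 - n5` and `m4 - m5` are `± 1`, hence they are opposite and the mirror image works.
  refine ⟨fun x => (starRingEnd ℂ) (drawing x), isPL_drawing.conj, almostEmb_drawing.conj,
    (starRingEnd ℂ).injective.comp_injOn injOn_drawing, fun n4' n5' m4' m5' hn4' hn5' hm4' hm5' => ?_⟩
  have e1 := hn4'.unique hn4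
  have e2 := hn5'.unique hn5
  have e3 := hm4'.unique hm4.conj
  have e4 := hm5'.unique hm5.conj
  have h1 := winding_diff hg hn4 hn5
  have h2 := winding_diff almostEmb_drawing hm4 hm5
  omega
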